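/- Bland(𝔅_n, π_0, 𝒩_{𝔅_n}) performs at least 2^n − 1 improving switches before terminating. -/

import Mathlib

/-! ## The Markov decision process `𝔅_n` -/

/-- Vertices of the MDP `𝔅_n`: a transportation vertex `t`, a sink `s`, a dummy vertex `d`,
and vertices `a i`, `b i` for `i ∈ {1,…,n}`. -/
inductive BV : Type where
  | t : BV
  | s : BV
  | d : BV
  | a : ℕ → BV
  | b : ℕ → BV
deriving DecidableEq

/-- The vertex `a i` for `i ∈ {1,…,n+1}`, with the convention `a (n+1) = s`. -/
def aN (n i : ℕ) : BV := if i = n + 1 then BV.s else BV.a i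

/-- The vertex `b i` for `i ∈ {1,…,n+1}`, with the convention `b (n+1) = d`. -/
def bN (n i : ℕ) : BV := if i = n + 1 then BV.d else BV.b i

/-- The vertex set of `𝔅_n`. -/
def IsBVertex (n : ℕ) : BV → Prop
  | BV.t => True
  | BV.s => True
  | BV.d => True
  | BV.a i => 1 ≤ i ∧ i ≤ n
  | BV.b i => 1 ≤ i ∧ i ≤ n

/-- The edge relation of `𝔅_n`: travel, enter, skip, board, stay, leave edges,
the edge `(d,s)` and the self-loop `(s,s)`. -/
def BEdge (n : ℕ) (u v : BV) : Prop :=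
  (∃ i, 1 ≤ i ∧ i ≤ n ∧ u = BV.t ∧ v = BV.a i) ∨
  (∃ i, 1 ≤ i ∧ i ≤ n ∧ u = BV.a i ∧ v = BV.b i) ∨
  (∃ i, 1 ≤ i ∧ i ≤ n ∧ u = BV.a i ∧ v = aN n (i + 1)) ∨
  (∃ i, 1 ≤ i ∧ i ≤ n ∧ u = BV.a i ∧ v = BV.t) ∨
  (∃ i, 1 ≤ i ∧ i ≤ n ∧ u = BV.b i ∧ v = bN n (i + 1)) ∨
  (∃ i, 1 ≤ i ∧ i ≤ n ∧ u = BV.b i ∧ v = aN n (i + 1)) ∨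
  (u = BV.d ∧ v = BV.s) ∨ (u = BV.s ∧ v = BV.s)

/-- The reward function of `𝔅_n`: `r(enter i) = 2^i`, `r(stay i) = 3/4`,
`r(board i) = -2^i + 5/4`, and reward `0` on all other edges. -/
def rB (n : ℕ) (u v : BV) : ℚ :=
  match u, v with
  | BV.a i, BV.b j => if i = j then 2 ^ i else 0
  | BV.a i, BV.t => -(2 ^ i) + 5 / 4
  | BV.b i, BV.b j => if j = i + 1 then 3 / 4 else 0
  | BV.b i, BV.d => if i = n then 3 / 4 else 0
  | _, _ => 0

/-- A policy for `𝔅_n` chooses an outgoing edge at every vertex. -/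
def IsBPolicy (n : ℕ) (π : BV → BV) : Prop := ∀ u, IsBVertex n u → BEdge n u (π u)

/-- A policy is weak unichain if it reaches the sink `s` from every vertex. -/
def BWeakUnichain (n : ℕ) (π : BV → BV) : Prop :=
  ∀ u, IsBVertex n u → ∃ k, π^[k] u = BV.s

open Classical in
/-- The value of a vertex `v` w.r.t. a (weak unichain) policy `π`:
the sum of the rewards along the path that `π` takes from `v` to the sink `s`. -/
noncomputable def BVal (n : ℕ) (π : BV → BV) (v : BV) : ℚ :=
  if h : ∃ k, π^[k] v = BV.s then
    ∑ i ∈ Finset.range (Nat.find h), rB n (π^[i] v) (π^[i + 1] v)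
  else 0

/-- The reduced costs of the edge `(u,v)` w.r.t. the policy `π`. -/
noncomputable def zB (n : ℕ) (π : BV → BV) (u v : BV) : ℚ :=
  rB n u v + BVal n π v - BVal n π u

/-- The edge `(u,v)` is an improving switch for `π` if its reduced costs are positive. -/
def BImproving (n : ℕ) (π : BV → BV) (u v : BV) : Prop :=
  BEdge n u v ∧ 0 < zB n π u v

/-- The Bland numbering `𝒩_{𝔅_n}` of the edges of `𝔅_n`. -/
def NB (n : ℕ) (u v : BV) : ℕ :=
  match u, v with
  | BV.t, BV.a i => i
  | BV.a i, BV.b _ => n + 1 + 5 * (i - 1)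
  | BV.a i, BV.a _ => n + 2 + 5 * (i - 1)
  | BV.a i, BV.s => n + 2 + 5 * (i - 1)
  | BV.a i, BV.t => n + 3 + 5 * (i - 1)
  | BV.b i, BV.b _ => n + 4 + 5 * (i - 1)
  | BV.b i, BV.d => n + 4 + 5 * (i - 1)
  | BV.b i, BV.a _ => n + 5 + 5 * (i - 1)
  | BV.b i, BV.s => n + 5 + 5 * (i - 1)
  | BV.d, BV.s => 6 * n + 1
  | BV.s, BV.s => 6 * n + 2
  | _, _ => 0

/-- One step of Bland's policy iteration with edge numbering `N`:
apply the improving switch with the smallest number. -/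
def IsBlandStep (n : ℕ) (N : BV → BV → ℕ) (π π' : BV → BV) : Prop :=
  ∃ u v, BImproving n π u v ∧ (∀ u' v', BImproving n π u' v' → N u v ≤ N u' v') ∧
    π' = Function.update π u v

/-- `BlandReaches n N π ψ` says that Bland's policy iteration started at `π` visits `ψ`. -/
def BlandReaches (n : ℕ) (N : BV → BV → ℕ) : (BV → BV) → (BV → BV) → Prop :=
  Relation.ReflTransGen (IsBlandStep n N)

/-- The canonical policy `π_0` for `0`: `travel 1`, `skip i` and `leave i` are active. -/
def pi0 (n : ℕ) : BV → BV := fun u =>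
  match u with
  | BV.t => BV.a 1
  | BV.a i => aN n (i + 1)
  | BV.b i => aN n (i + 1)
  | BV.d => BV.s
  | BV.s => BV.s

/-- The optimal policy `π_*`: `travel 1`, `enter i` for all `i`, `leave j` for `j < n`,
and `stay n` are active. -/
def piStar (n : ℕ) : BV → BV := fun u =>
  match u with
  | BV.t => BV.a 1
  | BV.a i => BV.b i
  | BV.b i => if i = n then BV.d else BV.a (i + 1)
  | BV.d => BV.s
  | BV.s => BV.s

/-! ## Bits and canonical policies -/

/-- The least significant set bit `ℓ_1(x)` (1-based). -/
noncomputable def lsb (x : ℕ) : ℕ := sInf {i | 1 ≤ i ∧ Nat.testBit x (i - 1)}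

/-- The most significant set bit `m(x)` (1-based). -/
noncomputable def msb1 (x : ℕ) : ℕ := sSup {i | 1 ≤ i ∧ Nat.testBit x (i - 1)}

/-- The least unset bit `ℓ_0(x)` (1-based). -/
noncomputable def lzero (x : ℕ) : ℕ := sInf {i | 1 ≤ i ∧ ¬ Nat.testBit x (i - 1)}

/-- `L_i(x) = max { j ≤ i-2 | x_j = 1 or j = 1 }` (1-based bits). -/
noncomputable def Lfun (i x : ℕ) : ℕ :=
  sSup {j | 1 ≤ j ∧ j ≤ i - 2 ∧ (Nat.testBit x (j - 1) ∨ j = 1)}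

/-- `IsCanonical n x π` says that `π` is the canonical policy `π_x` for `x`. -/
noncomputable def IsCanonical (n x : ℕ) (π : BV → BV) : Prop :=
  IsBPolicy n π ∧
  if x = 0 then
    π BV.t = BV.a 1 ∧
      ∀ i, 1 ≤ i → i ≤ n → π (BV.a i) = aN n (i + 1) ∧ π (BV.b i) = aN n (i + 1)
  else
    π BV.t = BV.a (lsb x) ∧
    π (BV.b (msb1 x)) = aN n (msb1 x + 1) ∧
    (∀ i, msb1 x < i → i ≤ n → π (BV.a i) = aN n (i + 1) ∧ π (BV.b i) = aN n (i + 1)) ∧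
    ∀ i, 1 ≤ i → i ≤ n → Nat.testBit x (i - 1) →
      π (BV.a i) = BV.b i ∧
      (i = 2 → π (BV.b 1) = BV.a 2 ∧ (¬ Nat.testBit x 0 → π (BV.a 1) = BV.a 2)) ∧
      (3 ≤ i → Nat.testBit x (i - 2) → π (BV.b (i - 1)) = BV.a i) ∧
      (3 ≤ i → ¬ Nat.testBit x (i - 2) →
        π (BV.b (i - 1)) = BV.b i ∧ π (BV.a (i - 1)) = BV.a i ∧
        π (BV.b (i - 2)) = BV.a (i - 1) ∧
        (Lfun i x < i - 2 →
          ∀ j, Lfun i x + 1 ≤ j → j ≤ i - 2 →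
            π (BV.a j) = BV.t ∧ π (BV.b (j - 1)) = BV.b j) ∧
        (Lfun i x = 1 → ¬ Nat.testBit x 0 → π (BV.a 1) = BV.t))

/-- Activating a list of edges in a policy, from left to right. -/
def activateList (π : BV → BV) (L : List (BV × BV)) : BV → BV :=
  L.foldl (fun σ e => Function.update σ e.1 e.2) π

/-- The canonical phases w.r.t. an odd number `x` (with `ℓ := ℓ_0(x)`), as a list of edges
to be activated in order. -/
noncomputable def phaseList (n x : ℕ) : List (BV × BV) :=
  let ℓ := lzero x
  (if Nat.testBit x ℓ then [(BV.b ℓ, aN n (ℓ + 1))] else []) ++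
  (if Nat.testBit x ℓ ∨ msb1 x < ℓ then [(BV.b (ℓ - 1), BV.b ℓ)] else []) ++
  [(BV.a ℓ, BV.b ℓ), (BV.t, BV.a ℓ)] ++
  ((List.range (ℓ - 2)).map fun j => (BV.a (j + 1), BV.t)) ++
  [(BV.a (ℓ - 1), BV.a ℓ)] ++
  (((List.range (ℓ - 3)).reverse).map fun j => (BV.b (j + 1), BV.b (j + 2))) ++
  (if ℓ = 2 then [(BV.b 1, BV.a 2)] else [])

/-! ## The Markov decision process `𝔇_n` -/

/-- Vertices of `𝔇_n`: the original vertices (`base`), and for every edge `(v,w)` of `𝔅_n`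
other than the self-loop, the gadget vertices `x v w`, `y v w`, `z v w`. -/
inductive DV : Type where
  | base : BV → DV
  | x : BV → BV → DV
  | y : BV → BV → DV
  | z : BV → BV → DV
deriving DecidableEq

/-- The edges of `𝔅_n` that get replaced by gadgets (all edges except the self-loop `(s,s)`). -/
def DEdgePair (n : ℕ) (v w : BV) : Prop := BEdge n v w ∧ v ≠ BV.s

/-- The vertex set of `𝔇_n`. -/
def IsDVertex (n : ℕ) : DV → Prop
  | DV.base v => IsBVertex n v
  | DV.x v w => DEdgePair n v w
  | DV.y v w => DEdgePair n v w
  | DV.z v w => DEdgePair n v w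

/-- The agent vertices of `𝔇_n` (all vertices except the randomization vertices `y v w`). -/
def IsDAgent (n : ℕ) : DV → Prop
  | DV.base v => IsBVertex n v
  | DV.x v w => DEdgePair n v w
  | DV.y _ _ => False
  | DV.z v w => DEdgePair n v w

/-- The agent edges of `𝔇_n`. -/
def DEdge (n : ℕ) (u u' : DV) : Prop :=
  (∃ v w, DEdgePair n v w ∧
    ((u = DV.base v ∧ u' = DV.x v w) ∨ (u = DV.x v w ∧ u' = DV.base v) ∨
     (u = DV.x v w ∧ u' = DV.y v w) ∨ (u = DV.z v w ∧ u' = DV.base w))) ∨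
  (u = DV.base BV.s ∧ u' = DV.base BV.s)

/-- The reward function of `𝔇_n`: the edge `(z v w, w)` carries the reward of the original
edge `(v,w)`; all other agent edges have reward `0`. -/
def rD (n : ℕ) (u u' : DV) : ℚ :=
  match u, u' with
  | DV.z v w, DV.base w' => if w' = w then rB n v w else 0
  | _, _ => 0

/-- A policy for `𝔇_n` chooses an outgoing agent edge at every agent vertex. -/
def IsDPolicy (n : ℕ) (π : DV → DV) : Prop := ∀ u, IsDAgent n u → DEdge n u (π u)

/-- `IsDVal n p π V` says that `V` satisfies the Bellman equations characterizing the value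
function of the policy `π` for `𝔇_n` with probabilities `p`, with `V s = 0`. -/
def IsDVal (n : ℕ) (p : BV → ℚ) (π : DV → DV) (V : DV → ℚ) : Prop :=
  V (DV.base BV.s) = 0 ∧
  (∀ u, IsDAgent n u → V u = rD n u (π u) + V (π u)) ∧
  (∀ v w, DEdgePair n v w →
    V (DV.y v w) = p v * V (DV.z v w) + (1 - p v) * V (DV.base v))

open Classical in
/-- The value function of a (weak unichain) policy `π` for `𝔇_n`: the unique solution of the
Bellman equations (normalized to `0` outside the vertex set). -/
noncomputable def DVal (n : ℕ) (p : BV → ℚ) (π : DV → DV) : DV → ℚ :=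
  if h : ∃! V : DV → ℚ, IsDVal n p π V ∧ ∀ u, ¬ IsDVertex n u → V u = 0 then
    h.exists.choose
  else fun _ => 0

/-- The reduced costs of an agent edge `(u,u')` of `𝔇_n` w.r.t. the policy `π`. -/
noncomputable def zD (n : ℕ) (p : BV → ℚ) (π : DV → DV) (u u' : DV) : ℚ :=
  rD n u u' + DVal n p π u' - DVal n p π u

/-- An agent edge of `𝔇_n` is an improving switch if its reduced costs are positive. -/
def DImproving (n : ℕ) (p : BV → ℚ) (π : DV → DV) (u u' : DV) : Prop :=
  DEdge n u u' ∧ 0 < zD n p π u u'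

/-- One (agent or positive-probability randomization) step of the process `𝔇_n` under `π`. -/
def DStep (n : ℕ) (p : BV → ℚ) (π : DV → DV) (u u' : DV) : Prop :=
  (IsDAgent n u ∧ u' = π u) ∨
  (∃ v w, DEdgePair n v w ∧ u = DV.y v w ∧
    ((u' = DV.z v w ∧ 0 < p v) ∨ (u' = DV.base v ∧ 0 < 1 - p v)))

/-- A policy for `𝔇_n` is weak unichain if it reaches `s` with probability one from every
vertex, i.e. `s` is reachable via active/positive-probability steps from every vertex. -/
def DWeakUnichain (n : ℕ) (p : BV → ℚ) (π : DV → DV) : Prop :=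
  ∀ u, IsDVertex n u → Relation.ReflTransGen (DStep n p π) u (DV.base BV.s)

/-- The twin policy of a policy `π` for `𝔅_n`: every vertex `v ≠ s` is `π v`-oriented. -/
def twin (π : BV → BV) : DV → DV := fun u =>
  match u with
  | DV.base v => if v = BV.s then DV.base BV.s else DV.x v (π v)
  | DV.x v w => if w = π v then DV.y v w else DV.base v
  | DV.y v w => DV.y v w
  | DV.z _ w => DV.base w

/-- The vertex numbering `𝒩_V` of `𝔅_n`: the order `(t, a 1, b 1, a 2, b 2, …, a n, b n, d, s)`. -/
def NV (n : ℕ) : BV → ℕ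
  | BV.t => 1
  | BV.a i => 2 * i
  | BV.b i => 2 * i + 1
  | BV.d => 2 * n + 2
  | BV.s => 2 * n + 3

/-- The specific probabilities `p_v = 2^{-𝒩_V(v)·(n+5)}`. -/
noncomputable def pSpec (n : ℕ) (v : BV) : ℚ := (2 : ℚ) ^ (-((NV n v * (n + 5) : ℕ) : ℤ))

/-- The set `B(v)` of agent edges of `𝔇_n` belonging to the vertex `v`. -/
def Belongs (n : ℕ) (v : BV) (e : DV × DV) : Prop :=
  ∃ w, DEdgePair n v w ∧
    (e = (DV.x v w, DV.y v w) ∨ e = (DV.base v, DV.x v w) ∨ e = (DV.x v w, DV.base v))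

/-- Applying the improving switch `e` to the policy `π` yields `π'`. -/
def DApply (n : ℕ) (p : BV → ℚ) (π : DV → DV) (e : DV × DV) (π' : DV → DV) : Prop :=
  DImproving n p π e.1 e.2 ∧ π' = Function.update π e.1 e.2

/-- One step of Bland's policy iteration on `𝔇_n` with edge numbering `N`. -/
def IsBlandStepD (n : ℕ) (p : BV → ℚ) (N : DV → DV → ℕ) (π π' : DV → DV) : Prop :=
  ∃ u u', DImproving n p π u u' ∧ (∀ a b, DImproving n p π a b → N u u' ≤ N a b) ∧
    π' = Function.update π u u'

/-- One step of Dantzig's policy iteration on `𝔇_n`: apply an improving switch of maximal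
reduced costs. -/
def DantzigStep (n : ℕ) (p : BV → ℚ) (π π' : DV → DV) : Prop :=
  ∃ u u', DImproving n p π u u' ∧
    (∀ a b, DImproving n p π a b → zD n p π a b ≤ zD n p π u u') ∧
    π' = Function.update π u u'

/-- The finite set of vertices of `𝔅_n`, as a `Finset`. -/
noncomputable def BVSet (n : ℕ) : Finset BV :=
  {BV.t, BV.d, BV.s} ∪ (Finset.Icc 1 n).image BV.a ∪ (Finset.Icc 1 n).image BV.b

/-- The finite set of agent vertices of `𝔇_n`, as a `Finset`. -/
noncomputable def DAgentSet (n : ℕ) : Finset DV := by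
  classical
  exact ((BVSet n).image DV.base) ∪
    (((BVSet n ×ˢ BVSet n).filter fun e => DEdgePair n e.1 e.2).image fun e => DV.x e.1 e.2) ∪
    (((BVSet n ×ˢ BVSet n).filter fun e => DEdgePair n e.1 e.2).image fun e => DV.z e.1 e.2)

/-- The objective of the Largest Increase rule: the sum of the values of all agent vertices. -/
noncomputable def LIobj (n : ℕ) (p : BV → ℚ) (π : DV → DV) : ℚ :=
  ∑ u ∈ DAgentSet n, DVal n p π u

/-- One step of the Largest Increase policy iteration on `𝔇_n`: apply an improving switch
maximizing the sum of all agent vertex values of the resulting policy. -/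
def LIStep (n : ℕ) (p : BV → ℚ) (π π' : DV → DV) : Prop :=
  ∃ u u', DImproving n p π u u' ∧
    (∀ a b, DImproving n p π a b →
      LIobj n p (Function.update π a b) ≤ LIobj n p (Function.update π u u')) ∧
    π' = Function.update π u u'

/-- `N` is a Bland numbering `𝒩_{𝔇_n}` for `𝔇_n`: it is injective on agent edges, the edges
`(x v w, v)` all come first, within each gadget `(x v w, y v w)` precedes `(v, x v w)`,
the gadget blocks are ordered according to `𝒩_{𝔅_n}`, and the self-loop comes last. -/
def IsDBlandNumbering (n : ℕ) (N : DV → DV → ℕ) : Prop :=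
  (∀ u₁ u₂ u₁' u₂', DEdge n u₁ u₂ → DEdge n u₁' u₂' → N u₁ u₂ = N u₁' u₂' →
    u₁ = u₁' ∧ u₂ = u₂') ∧
  (∀ v w v' w', DEdgePair n v w → DEdgePair n v' w' →
    N (DV.x v w) (DV.base v) < N (DV.x v' w') (DV.y v' w')) ∧
  (∀ v w, DEdgePair n v w → N (DV.x v w) (DV.y v w) < N (DV.base v) (DV.x v w)) ∧
  (∀ v w v' w', DEdgePair n v w → DEdgePair n v' w' → NB n v w < NB n v' w' →
    N (DV.base v) (DV.x v w) < N (DV.x v' w') (DV.y v' w')) ∧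
  (∀ v w, DEdgePair n v w → N (DV.base v) (DV.x v w) < N (DV.base BV.s) (DV.base BV.s))
/-! ## Abstract configurations -/

/-- Choice at a vertex `a i`. -/
inductive AS : Type where
  | E : AS
  | S : AS
  | B : AS

/-- Bellman equations of a configuration: `p` is the target of `t`, `α i` the choice at `a i`,
`β i = true` iff `stay i` is active. -/
structure Bell (n p : ℕ) (α : ℕ → AS) (β : ℕ → Bool) (A B : ℕ → ℚ) (W : ℚ) : Prop where
  p1 : 1 ≤ p
  pn : p ≤ n
  hW : W = A p
  A0 : A (n + 1) = 0
  B0 : B (n + 1) = 0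
  α0 : α (n + 1) = AS.S
  β0 : β (n + 1) = false
  hE : ∀ i, 1 ≤ i → i ≤ n → α i = AS.E → A i = 2 ^ i + B i
  hS : ∀ i, 1 ≤ i → i ≤ n → α i = AS.S → A i = A (i + 1)
  hB : ∀ i, 1 ≤ i → i ≤ n → α i = AS.B → A i = W - 2 ^ i + 5 / 4
  hl : ∀ i, 1 ≤ i → i ≤ n → β i = false → B i = A (i + 1)
  hy : ∀ i, 1 ≤ i → i ≤ n → β i = true → B i = 3 / 4 + B (i + 1)

/-- No improving switch at level `j`. -/
structure Opt (A B : ℕ → ℚ) (W : ℚ) (j : ℕ) : Prop where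
  enter : 2 ^ j + B j ≤ A j
  skip : A (j + 1) ≤ A j
  board : W - 2 ^ j + 5 / 4 ≤ A j
  stay : 3 / 4 + B (j + 1) ≤ B j
  leave : A (j + 1) ≤ B j

/-- One Bland step on the level of configurations. -/
inductive AbsStep (n p : ℕ) (α : ℕ → AS) (β : ℕ → Bool) (A B : ℕ → ℚ) (W : ℚ) :
    ℕ → (ℕ → AS) → (ℕ → Bool) → Prop where
  | travel (i : ℕ) (h1 : 1 ≤ i) (hn : i ≤ n) (h : W < A i)
      (hT : ∀ j, 1 ≤ j → j < i → A j ≤ W) : AbsStep n p α β A B W i α β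
  | enter (i : ℕ) (h1 : 1 ≤ i) (hn : i ≤ n) (hT : ∀ j, 1 ≤ j → j ≤ n → A j ≤ W)
      (hO : ∀ j, 1 ≤ j → j < i → Opt A B W j) (h : A i < 2 ^ i + B i) :
      AbsStep n p α β A B W p (Function.update α i AS.E) β
  | skip (i : ℕ) (h1 : 1 ≤ i) (hn : i ≤ n) (hT : ∀ j, 1 ≤ j → j ≤ n → A j ≤ W)
      (hO : ∀ j, 1 ≤ j → j < i → Opt A B W j) (he : 2 ^ i + B i ≤ A i) (h : A i < A (i + 1)) :
      AbsStep n p α β A B W p (Function.update α i AS.S) β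
  | board (i : ℕ) (h1 : 1 ≤ i) (hn : i ≤ n) (hT : ∀ j, 1 ≤ j → j ≤ n → A j ≤ W)
      (hO : ∀ j, 1 ≤ j → j < i → Opt A B W j) (he : 2 ^ i + B i ≤ A i) (hs : A (i + 1) ≤ A i)
      (h : A i < W - 2 ^ i + 5 / 4) :
      AbsStep n p α β A B W p (Function.update α i AS.B) β
  | stay (i : ℕ) (h1 : 1 ≤ i) (hn : i ≤ n) (hT : ∀ j, 1 ≤ j → j ≤ n → A j ≤ W)
      (hO : ∀ j, 1 ≤ j → j < i → Opt A B W j) (he : 2 ^ i + B i ≤ A i) (hs : A (i + 1) ≤ A i)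
      (hb : W - 2 ^ i + 5 / 4 ≤ A i) (h : B i < 3 / 4 + B (i + 1)) :
      AbsStep n p α β A B W p α (Function.update β i true)
  | leave (i : ℕ) (h1 : 1 ≤ i) (hn : i ≤ n) (hT : ∀ j, 1 ≤ j → j ≤ n → A j ≤ W)
      (hO : ∀ j, 1 ≤ j → j < i → Opt A B W j) (he : 2 ^ i + B i ≤ A i) (hs : A (i + 1) ≤ A i)
      (hb : W - 2 ^ i + 5 / 4 ≤ A i) (hst : 3 / 4 + B (i + 1) ≤ B i) (h : B i < A (i + 1)) :
      AbsStep n p α β A B W p α (Function.update β i false)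

section forced
variable {n p : ℕ} {α : ℕ → AS} {β : ℕ → Bool} {A B : ℕ → ℚ} {W : ℚ}
  {p' : ℕ} {α' : ℕ → AS} {β' : ℕ → Bool}

theorem forced_travel (st : AbsStep n p α β A B W p' α' β') (i : ℕ) (h1 : 1 ≤ i) (hn : i ≤ n)
    (hT : ∀ j, 1 ≤ j → j < i → A j ≤ W) (h : W < A i) : p' = i ∧ α' = α ∧ β' = β := by
  cases st with
  | travel i' h1' hn' h' hT' =>
    rcases lt_trichotomy i p' with hlt | heq | hgt
    · linarith [hT' i h1 hlt]
    · exact ⟨heq.symm, rfl, rfl⟩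
    · linarith [hT p' h1' hgt]
  | enter i' h1' hn' hT' => linarith [hT' i h1 hn]
  | skip i' h1' hn' hT' => linarith [hT' i h1 hn]
  | board i' h1' hn' hT' => linarith [hT' i h1 hn]
  | stay i' h1' hn' hT' => linarith [hT' i h1 hn]
  | leave i' h1' hn' hT' => linarith [hT' i h1 hn]

theorem forced_none (st : AbsStep n p α β A B W p' α' β')
    (hT : ∀ j, 1 ≤ j → j ≤ n → A j ≤ W) (hO : ∀ j, 1 ≤ j → j ≤ n → Opt A B W j) : False := by
  cases st with
  | travel i' h1' hn' h' hT' => linarith [hT _ h1' hn']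
  | enter i' h1' hn' hT' hO' h => linarith [(hO i' h1' hn').enter]
  | skip i' h1' hn' hT' hO' he h => linarith [(hO i' h1' hn').skip]
  | board i' h1' hn' hT' hO' he hs h => linarith [(hO i' h1' hn').board]
  | stay i' h1' hn' hT' hO' he hs hb h => linarith [(hO i' h1' hn').stay]
  | leave i' h1' hn' hT' hO' he hs hb hst h => linarith [(hO i' h1' hn').leave]

/-- The step happens at level `i` if levels below are optimal and level `i` is not. -/
theorem forced_level (st : AbsStep n p α β A B W p' α' β') (i : ℕ) (h1 : 1 ≤ i) (hn : i ≤ n)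
    (hT : ∀ j, 1 ≤ j → j ≤ n → A j ≤ W) (hO : ∀ j, 1 ≤ j → j < i → Opt A B W j)
    (hN : ¬ Opt A B W i) :
    p' = p ∧
    ((A i < 2 ^ i + B i ∧ α' = Function.update α i AS.E ∧ β' = β) ∨
     (2 ^ i + B i ≤ A i ∧ A i < A (i + 1) ∧ α' = Function.update α i AS.S ∧ β' = β) ∨
     (2 ^ i + B i ≤ A i ∧ A (i + 1) ≤ A i ∧ A i < W - 2 ^ i + 5 / 4 ∧
        α' = Function.update α i AS.B ∧ β' = β) ∨
     (2 ^ i + B i ≤ A i ∧ A (i + 1) ≤ A i ∧ W - 2 ^ i + 5 / 4 ≤ A i ∧ B i < 3 / 4 + B (i + 1) ∧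
        α' = α ∧ β' = Function.update β i true) ∨
     (2 ^ i + B i ≤ A i ∧ A (i + 1) ≤ A i ∧ W - 2 ^ i + 5 / 4 ≤ A i ∧ 3 / 4 + B (i + 1) ≤ B i ∧
        B i < A (i + 1) ∧ α' = α ∧ β' = Function.update β i false)) := by
  cases st with
  | travel i' h1' hn' h' hT' => linarith [hT _ h1' hn']
  | enter i' h1' hn' hT' hO' h =>
    rcases lt_trichotomy i i' with hlt | heq | hgt
    · exact absurd (hO' i h1 hlt) hN
    · subst heq; exact ⟨rfl, Or.inl ⟨h, rfl, rfl⟩⟩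
    · linarith [(hO i' h1' hgt).enter]
  | skip i' h1' hn' hT' hO' he h =>
    rcases lt_trichotomy i i' with hlt | heq | hgt
    · exact absurd (hO' i h1 hlt) hN
    · subst heq; exact ⟨rfl, Or.inr (Or.inl ⟨he, h, rfl, rfl⟩)⟩
    · linarith [(hO i' h1' hgt).skip]
  | board i' h1' hn' hT' hO' he hs h =>
    rcases lt_trichotomy i i' with hlt | heq | hgt
    · exact absurd (hO' i h1 hlt) hN
    · subst heq; exact ⟨rfl, Or.inr (Or.inr (Or.inl ⟨he, hs, h, rfl, rfl⟩))⟩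
    · linarith [(hO i' h1' hgt).board]
  | stay i' h1' hn' hT' hO' he hs hb h =>
    rcases lt_trichotomy i i' with hlt | heq | hgt
    · exact absurd (hO' i h1 hlt) hN
    · subst heq; exact ⟨rfl, Or.inr (Or.inr (Or.inr (Or.inl ⟨he, hs, hb, h, rfl, rfl⟩)))⟩
    · linarith [(hO i' h1' hgt).stay]
  | leave i' h1' hn' hT' hO' he hs hb hst h =>
    rcases lt_trichotomy i i' with hlt | heq | hgt
    · exact absurd (hO' i h1 hlt) hN
    · subst heq; exact ⟨rfl, Or.inr (Or.inr (Or.inr (Or.inr ⟨he, hs, hb, hst, h, rfl, rfl⟩)))⟩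
    · linarith [(hO i' h1' hgt).leave]

theorem forced_enter (st : AbsStep n p α β A B W p' α' β') (i : ℕ) (h1 : 1 ≤ i) (hn : i ≤ n)
    (hT : ∀ j, 1 ≤ j → j ≤ n → A j ≤ W) (hO : ∀ j, 1 ≤ j → j < i → Opt A B W j)
    (h : A i < 2 ^ i + B i) : p' = p ∧ α' = Function.update α i AS.E ∧ β' = β := by
  obtain ⟨hp, h' | h' | h' | h' | h'⟩ :=
    forced_level st i h1 hn hT hO (fun o => by linarith [o.enter])
  · exact ⟨hp, h'.2⟩
  all_goals linarith [h'.1]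

theorem forced_skip (st : AbsStep n p α β A B W p' α' β') (i : ℕ) (h1 : 1 ≤ i) (hn : i ≤ n)
    (hT : ∀ j, 1 ≤ j → j ≤ n → A j ≤ W) (hO : ∀ j, 1 ≤ j → j < i → Opt A B W j)
    (he : 2 ^ i + B i ≤ A i) (h : A i < A (i + 1)) :
    p' = p ∧ α' = Function.update α i AS.S ∧ β' = β := by
  obtain ⟨hp, h' | h' | h' | h' | h'⟩ :=
    forced_level st i h1 hn hT hO (fun o => by linarith [o.skip])
  · linarith [h'.1]
  · exact ⟨hp, h'.2.2⟩
  all_goals linarith [h'.2.1]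

theorem forced_board (st : AbsStep n p α β A B W p' α' β') (i : ℕ) (h1 : 1 ≤ i) (hn : i ≤ n)
    (hT : ∀ j, 1 ≤ j → j ≤ n → A j ≤ W) (hO : ∀ j, 1 ≤ j → j < i → Opt A B W j)
    (he : 2 ^ i + B i ≤ A i) (hs : A (i + 1) ≤ A i) (h : A i < W - 2 ^ i + 5 / 4) :
    p' = p ∧ α' = Function.update α i AS.B ∧ β' = β := by
  obtain ⟨hp, h' | h' | h' | h' | h'⟩ :=
    forced_level st i h1 hn hT hO (fun o => by linarith [o.board])
  · linarith [h'.1]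
  · linarith [h'.2.1]
  · exact ⟨hp, h'.2.2.2⟩
  all_goals linarith [h'.2.2.1]

theorem forced_stay (st : AbsStep n p α β A B W p' α' β') (i : ℕ) (h1 : 1 ≤ i) (hn : i ≤ n)
    (hT : ∀ j, 1 ≤ j → j ≤ n → A j ≤ W) (hO : ∀ j, 1 ≤ j → j < i → Opt A B W j)
    (he : 2 ^ i + B i ≤ A i) (hs : A (i + 1) ≤ A i) (hb : W - 2 ^ i + 5 / 4 ≤ A i)
    (h : B i < 3 / 4 + B (i + 1)) :
    p' = p ∧ α' = α ∧ β' = Function.update β i true := by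
  obtain ⟨hp, h' | h' | h' | h' | h'⟩ :=
    forced_level st i h1 hn hT hO (fun o => by linarith [o.stay])
  · linarith [h'.1]
  · linarith [h'.2.1]
  · linarith [h'.2.2.1]
  · exact ⟨hp, h'.2.2.2.2⟩
  · linarith [h'.2.2.2.1]

theorem forced_leave (st : AbsStep n p α β A B W p' α' β') (i : ℕ) (h1 : 1 ≤ i) (hn : i ≤ n)
    (hT : ∀ j, 1 ≤ j → j ≤ n → A j ≤ W) (hO : ∀ j, 1 ≤ j → j < i → Opt A B W j)
    (he : 2 ^ i + B i ≤ A i) (hs : A (i + 1) ≤ A i) (hb : W - 2 ^ i + 5 / 4 ≤ A i)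
    (hst : 3 / 4 + B (i + 1) ≤ B i) (h : B i < A (i + 1)) :
    p' = p ∧ α' = α ∧ β' = Function.update β i false := by
  obtain ⟨hp, h' | h' | h' | h' | h'⟩ :=
    forced_level st i h1 hn hT hO (fun o => by linarith [o.leave])
  · linarith [h'.1]
  · linarith [h'.2.1]
  · linarith [h'.2.2.1]
  · linarith [h'.2.2.2.1]
  · exact ⟨hp, h'.2.2.2.2.2⟩

end forced

/-! ## Regular configurations -/

/-- Allowed pairs of choices on consecutive levels. -/
def Rg : AS → Bool → AS → Bool → Prop
  | AS.E, false, x, _ => x ≠ AS.B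
  | AS.E, true, x, y => x = AS.B ∨ (x = AS.S ∧ y = false)
  | AS.S, false, x, y => x = AS.E ∨ (x = AS.S ∧ y = false)
  | AS.S, true, x, _ => x = AS.E
  | AS.B, false, x, y => x = AS.S ∧ y = true
  | AS.B, true, x, _ => x = AS.B

/-- Regularity of all levels from `q` on. -/
def Reg (n : ℕ) (α : ℕ → AS) (β : ℕ → Bool) (q : ℕ) : Prop :=
  ∀ j, q ≤ j → j ≤ n → Rg (α j) (β j) (α (j + 1)) (β (j + 1))

theorem two_le_pow (j : ℕ) (hj : 1 ≤ j) : (2 : ℚ) ≤ 2 ^ j := by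
  calc (2 : ℚ) = 2 ^ 1 := by norm_num
    _ ≤ 2 ^ j := pow_le_pow_right₀ (by norm_num) hj

section vals
variable {n p : ℕ} {α : ℕ → AS} {β : ℕ → Bool} {A B : ℕ → ℚ} {W : ℚ}

theorem Bell.Sl (h : Bell n p α β A B W) (j : ℕ) (h1 : 1 ≤ j) (hj : j ≤ n + 1)
    (hα : α j = AS.S) (hβ : β j = false) : A j = B j := by
  rcases Nat.lt_or_ge n j with h' | h'
  · obtain rfl : j = n + 1 := by omega
    rw [h.A0, h.B0]
  · rw [h.hS j h1 h' hα, h.hl j h1 h' hβ]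

theorem Bell.le_n (h : Bell n p α β A B W) (j : ℕ) (hj : j ≤ n + 1) (hα : α j ≠ AS.S) : j ≤ n := by
  by_contra h'
  obtain rfl : j = n + 1 := by omega
  exact hα h.α0

/-- Values are bounded by `W` on a regular tail. -/
theorem Bell.mono (h : Bell n p α β A B W) (q : ℕ) (hq : 1 ≤ q)
    (hr : Reg n α β q) (h0 : α q = AS.B → B q ≤ W) (h1 : A q ≤ W) (j : ℕ) (hqj : q ≤ j) :
    j ≤ n + 1 → (α j = AS.B → B j ≤ W) ∧ A j ≤ W := by
  induction j, hqj using Nat.le_induction with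
  | base => intro _; exact ⟨h0, h1⟩
  | succ j hj ih =>
    intro hjn
    have hj1 : 1 ≤ j := by omega
    have hjn' : j ≤ n := by omega
    obtain ⟨ihB, ihA⟩ := ih (by omega)
    have hR := hr j hj hjn'
    have h2 := two_le_pow j hj1
    have h2' := two_le_pow (j + 1) (by omega)
    have hBd : α (j + 1) = AS.B → A (j + 1) ≤ W := by
      intro hb
      have := h.hB (j + 1) (by omega) (h.le_n (j + 1) (by omega) (by rw [hb]; simp)) hb
      linarith
    cases hα : α j <;> cases hβ : β j <;> rw [hα, hβ] at hR <;> simp only [Rg] at hR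
    · refine ⟨fun hb => absurd hb hR, ?_⟩
      linarith [h.hE j hj1 hjn' hα, h.hl j hj1 hjn' hβ]
    · have e1 := h.hE j hj1 hjn' hα
      have e2 := h.hy j hj1 hjn' hβ
      rcases hR with hR | ⟨hR, hR'⟩
      · exact ⟨fun _ => by linarith, hBd hR⟩
      · refine ⟨fun hb => (by rw [hR] at hb; cases hb), ?_⟩
        linarith [h.Sl (j + 1) (by omega) hjn hR hR']
    · refine ⟨fun hb => (by rcases hR with hR | ⟨hR, -⟩ <;> rw [hR] at hb <;> cases hb), ?_⟩
      linarith [h.hS j hj1 hjn' hα]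
    · refine ⟨fun hb => (by rw [hR] at hb; cases hb), ?_⟩
      linarith [h.hS j hj1 hjn' hα]
    · refine ⟨fun hb => (by rw [hR.1] at hb; cases hb), ?_⟩
      linarith [h.hl j hj1 hjn' hβ, ihB hα]
    · have e2 := h.hy j hj1 hjn' hβ
      exact ⟨fun _ => by linarith [ihB hα], hBd hR⟩

/-- Values on a chain of `enter`/`leave` levels. -/
theorem Bell.chain (h : Bell n p α β A B W) (j q : ℕ) (hj1 : 1 ≤ j) (hjq : j ≤ q) :
    q ≤ n + 1 → (∀ i, j ≤ i → i < q → α i = AS.E ∧ β i = false) →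
    A j = A q + 2 ^ q - 2 ^ j := by
  induction q, hjq using Nat.le_induction with
  | base => intro _ _; ring
  | succ q hq ih =>
    intro hqn hc
    have hc' := hc q hq (by omega)
    rw [ih (by omega) (fun i h1 h2 => hc i h1 (by omega)), h.hE q (by omega) (by omega) hc'.1,
      h.hl q (by omega) (by omega) hc'.2]
    ring

/-- Regular tails have values that do not depend on the rest. -/
theorem agree {p' : ℕ} {α' : ℕ → AS} {β' : ℕ → Bool} {A' B' : ℕ → ℚ} {W' : ℚ}
    (h : Bell n p α β A B W) (h' : Bell n p' α' β' A' B' W') (q : ℕ) (hq : 1 ≤ q)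
    (hr : Reg n α β q) (hα : ∀ j, q ≤ j → j ≤ n → α' j = α j)
    (hβ : ∀ j, q ≤ j → j ≤ n → β' j = β j) (j : ℕ) (hqj : q ≤ j) (hjn : j ≤ n + 1) :
    B' j = B j ∧ (α j ≠ AS.B → A' j = A j) := by
  induction hjn using Nat.decreasingInduction with
  | self => exact ⟨by rw [h.B0, h'.B0], fun _ => by rw [h.A0, h'.A0]⟩
  | of_succ j hj ih =>
    have hj1 : 1 ≤ j := by omega
    have hjn' : j ≤ n := by omega
    obtain ⟨ihB, ihA⟩ := ih (by omega)
    have hR := hr j hqj hjn'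
    have ea := hα j hqj hjn'
    have eb := hβ j hqj hjn'
    cases hα : α j <;> cases hβ : β j <;> rw [hα, hβ] at hR <;> simp only [Rg] at hR <;>
      rw [hα] at ea <;> rw [hβ] at eb
    · have hA := ihA hR
      have e1 := h.hl j hj1 hjn' hβ
      have e2 := h'.hl j hj1 hjn' eb
      have e3 := h.hE j hj1 hjn' hα
      have e4 := h'.hE j hj1 hjn' ea
      exact ⟨by linarith, fun _ => by linarith⟩
    · have e1 := h.hy j hj1 hjn' hβ
      have e2 := h'.hy j hj1 hjn' eb
      have e3 := h.hE j hj1 hjn' hα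
      have e4 := h'.hE j hj1 hjn' ea
      exact ⟨by linarith, fun _ => by linarith⟩
    · have hA := ihA (by rcases hR with hR | ⟨hR, -⟩ <;> rw [hR] <;> simp)
      have e1 := h.hl j hj1 hjn' hβ
      have e2 := h'.hl j hj1 hjn' eb
      have e3 := h.hS j hj1 hjn' hα
      have e4 := h'.hS j hj1 hjn' ea
      exact ⟨by linarith, fun _ => by linarith⟩
    · have hA := ihA (by rw [hR]; simp)
      have e1 := h.hy j hj1 hjn' hβ
      have e2 := h'.hy j hj1 hjn' eb
      have e3 := h.hS j hj1 hjn' hα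
      have e4 := h'.hS j hj1 hjn' ea
      exact ⟨by linarith, fun _ => by linarith⟩
    · have hA := ihA (by rw [hR.1]; simp)
      have e1 := h.hl j hj1 hjn' hβ
      have e2 := h'.hl j hj1 hjn' eb
      exact ⟨by linarith, fun h0 => absurd rfl h0⟩
    · have e1 := h.hy j hj1 hjn' hβ
      have e2 := h'.hy j hj1 hjn' eb
      exact ⟨by linarith, fun h0 => absurd rfl h0⟩

end vals

section invariant
variable {n p : ℕ} {α : ℕ → AS} {β : ℕ → Bool} {A B : ℕ → ℚ} {W K : ℚ}
  {p' : ℕ} {α' : ℕ → AS} {β' : ℕ → Bool} {A' B' : ℕ → ℚ} {W' : ℚ}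

/-- The value of `b q` only depends on the regular tail and on `β q`. -/
theorem agreeB (h : Bell n p α β A B W) (h' : Bell n p' α' β' A' B' W') (q : ℕ) (hq : 1 ≤ q)
    (hqn : q ≤ n) (hr : Reg n α β q) (hα : ∀ j, q + 1 ≤ j → j ≤ n → α' j = α j)
    (hβ : ∀ j, q ≤ j → j ≤ n → β' j = β j) : B' q = B q := by
  have ag := agree h h' (q + 1) (by omega) (fun j hj => hr j (by omega)) hα
    (fun j hj => hβ j (by omega)) (q + 1) le_rfl (by omega)
  have eb := hβ q le_rfl hqn
  have hR := hr q le_rfl hqn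
  cases hb : β q <;> rw [hb] at eb
  · rw [h.hl q hq hqn hb, h'.hl q hq hqn eb]
    apply ag.2
    intro hB
    rw [hb, hB] at hR
    cases hα : α q <;> rw [hα] at hR <;> simp [Rg] at hR
  · rw [h.hy q hq hqn hb, h'.hy q hq hqn eb, ag.1]

/-- The invariant; `K` is an upper bound on the relevant values. -/
inductive BInv (n p : ℕ) (α : ℕ → AS) (β : ℕ → Bool) (A B : ℕ → ℚ) (W K : ℚ) : Prop where
  | I0 (hp : p = 1) (hα : α 1 ≠ AS.B) (hr : Reg n α β 1) (hW : W ≤ K) : BInv n p α β A B W K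
  | I1 (i : ℕ) (h1 : 1 ≤ i) (hi : i + 1 ≤ n) (hp : p = 1)
      (hlow : ∀ j, 1 ≤ j → j < i → α j = AS.E ∧ β j = false) (hαi : α i = AS.E)
      (hβi : β i = true) (hα : α (i + 1) = AS.E) (hr : Reg n α β (i + 1)) (hW : W ≤ K) :
      BInv n p α β A B W K
  | I2 (k c : ℕ) (hk : k + 1 ≤ c) (hc : c + 1 ≤ n) (hp : p = c + 1)
      (hlow : ∀ j, 1 ≤ j → j ≤ k → α j = AS.B ∧ β j = false)
      (hmid : ∀ j, k < j → j < c → α j = AS.E ∧ β j = false)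
      (hαc : α c = AS.E) (hβc : β c = true) (hα : α (c + 1) = AS.E) (hr : Reg n α β (c + 1))
      (hW : W ≤ K) : BInv n p α β A B W K
  | I3 (k c : ℕ) (hk : k + 2 ≤ c) (hc : c + 1 ≤ n) (hp : p = c + 1)
      (hlow : ∀ j, 1 ≤ j → j < c → α j = AS.B) (hβ : ∀ j, 1 ≤ j → j ≤ k → β j = false)
      (hαc : α c = AS.S) (hα : α (c + 1) = AS.E) (hr : Reg n α β (k + 1))
      (hW : W ≤ B (k + 1)) (hK : B (k + 1) ≤ K) : BInv n p α β A B W K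
  | I4 (hα : α 1 = AS.E) (hr : Reg n α β 1) (hW : W < A 1) (hK : A 1 ≤ K) : BInv n p α β A B W K
  | I5 (hn : 2 ≤ n) (hp : p = 2) (hα1 : α 1 = AS.S) (hα2 : α 2 = AS.E) (hr : Reg n α β 1)
      (hW : W ≤ K) : BInv n p α β A B W K

theorem step_I0 (h : Bell n p α β A B W) (h' : Bell n p' α' β' A' B' W')
    (st : AbsStep n p α β A B W p' α' β')
    (hp : p = 1) (hα : α 1 ≠ AS.B) (hr : Reg n α β 1) (hW : W ≤ K) :
    BInv n p' α' β' A' B' W' (K + 2) := by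
  classical
  subst hp
  have hn1 : 1 ≤ n := h.pn
  have hWA := h.hW
  have hT : ∀ j, 1 ≤ j → j ≤ n → A j ≤ W := fun j hj hjn =>
    (h.mono 1 le_rfl hr (fun hb => absurd hb hα) hWA.ge j hj (by omega)).2
  have hex : ∃ q, 1 ≤ q ∧ ¬ (α q = AS.E ∧ β q = false) :=
    ⟨n + 1, by omega, fun hc => by have := hc.1; rw [h.α0] at this; cases this⟩
  obtain ⟨q, ⟨hq1, hqN⟩, hqmin⟩ : ∃ q, (1 ≤ q ∧ ¬ (α q = AS.E ∧ β q = false)) ∧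
      ∀ j, 1 ≤ j → j < q → α j = AS.E ∧ β j = false :=
    ⟨Nat.find hex, Nat.find_spec hex, fun j hj hjq => by
      have := Nat.find_min hex hjq
      by_contra hc
      exact this ⟨hj, hc⟩⟩
  have hqn : q ≤ n + 1 := by
    by_contra hc
    have := (hqmin (n + 1) (by omega) (by omega)).1
    rw [h.α0] at this; cases this
  have hch : ∀ j, 1 ≤ j → j ≤ q → A j = A q + 2 ^ q - 2 ^ j := fun j hj hjq =>
    h.chain j q hj hjq hqn (fun i hi hiq => hqmin i (by omega) hiq)
  have hWq : W = A q + 2 ^ q - 2 := by rw [hWA, hch 1 le_rfl hq1]; norm_num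
  have hbd : ∀ j, 1 ≤ j → j ≤ q → W - 2 ^ j + 5 / 4 ≤ A j := fun j hj hjq => by
    linarith [hch j hj hjq]
  have hOpt : ∀ j, 1 ≤ j → j < q → 3 / 4 + B (j + 1) ≤ A (j + 1) → Opt A B W j := by
    intro j hj hjq hs
    have e1 := h.hE j hj (by omega) (hqmin j hj hjq).1
    have e2 := h.hl j hj (by omega) (hqmin j hj hjq).2
    have := two_le_pow j hj
    exact ⟨by linarith, by linarith, hbd j hj hjq.le, by linarith, by linarith⟩
  have hOptlt : ∀ j, 1 ≤ j → j + 1 < q → Opt A B W j := by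
    intro j hj hjq
    apply hOpt j hj (by omega)
    have e1 := h.hE (j + 1) (by omega) (by omega) (hqmin (j + 1) (by omega) hjq).1
    have := two_le_pow (j + 1) (by omega)
    linarith
  have hOptall : 3 / 4 + B q ≤ A q → ∀ j, 1 ≤ j → j < q → Opt A B W j := by
    intro hs j hj hjq
    rcases Nat.lt_or_ge (j + 1) q with hlt | hge
    · exact hOptlt j hj hlt
    · obtain rfl : q = j + 1 := by omega
      exact hOpt j hj hjq hs
  have h2q := two_le_pow q hq1
  cases hαq : α q with
  | B =>
    exfalso
    rcases Nat.lt_or_ge 1 q with h1 | h1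
    · have hR := hr (q - 1) (by omega) (by omega)
      obtain ⟨e1, e2⟩ := hqmin (q - 1) (by omega) (by omega)
      rw [e1, e2, Nat.sub_add_cancel hq1] at hR
      exact hR hαq
    · obtain rfl : q = 1 := by omega
      exact hα hαq
  | E =>
    have hqn' : q ≤ n := h.le_n q hqn (by rw [hαq]; simp)
    have hβq : β q = true := by
      cases hb : β q
      · exact absurd ⟨hαq, hb⟩ hqN
      · rfl
    have e1 := h.hE q hq1 hqn' hαq
    have e2 := h.hy q hq1 hqn' hβq
    have hR := hr q hq1 hqn'
    rw [hαq, hβq] at hR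
    simp only [Rg] at hR
    have hAB : A (q + 1) = B (q + 1) := by
      rcases hR with hR | hR
      · have := h.hB (q + 1) (by omega) (h.le_n _ (by omega) (by rw [hR]; simp)) hR
        rw [this, pow_succ]; linarith
      · exact h.Sl (q + 1) (by omega) (by omega) hR.1 hR.2
    have hO : ∀ j, 1 ≤ j → j ≤ q → Opt A B W j := by
      intro j hj hjq
      rcases Nat.lt_or_ge j q with hlt | hge
      · exact hOptall (by linarith) j hj hlt
      · obtain rfl : q = j := by omega
        exact ⟨by linarith, by linarith, hbd q hq1 le_rfl, by linarith, by linarith⟩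
    rcases Nat.lt_or_ge q n with hlt | hge
    · obtain ⟨rfl, rfl, rfl⟩ := forced_enter st (q + 1) (by omega) hlt hT
        (fun j hj hjq => hO j hj (by omega)) (by
          have := two_le_pow (q + 1) (by omega); linarith)
      have a1 : ∀ j, j ≠ q + 1 → Function.update α (q + 1) AS.E j = α j := fun j hj =>
        Function.update_of_ne hj _ _
      have hB' : B' (q + 1) = B (q + 1) := agreeB h h' (q + 1) (by omega) hlt
        (fun j hj => hr j (by omega)) (fun j hj _ => a1 j (by omega)) (fun _ _ _ => rfl)
      have hαq' : Function.update α (q + 1) AS.E q = AS.E := by rw [a1 q (by omega), hαq]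
      have hlow' : ∀ j, 1 ≤ j → j < q →
          Function.update α (q + 1) AS.E j = AS.E ∧ β' j = false := fun j hj hjq => by
        rw [a1 j (by omega)]; exact hqmin j hj hjq
      refine BInv.I1 q hq1 hlt rfl hlow' hαq' hβq (Function.update_self _ _ _) ?_ ?_
      · intro j hj hjn
        rcases Nat.lt_or_ge (q + 1) j with hj' | hj'
        · rw [a1 j (by omega), a1 (j + 1) (by omega)]
          exact hr j (by omega) hjn
        · obtain rfl : j = q + 1 := by omega
          rw [a1 (q + 1 + 1) (by omega), Function.update_self]
          have hR2 := hr (q + 1) (by omega) hlt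
          rcases hR with hR | hR
          · rw [hR] at hR2
            cases hb : β' (q + 1) <;> rw [hb] at hR2 <;> simp only [Rg] at hR2 ⊢
            · rw [hR2.1]; simp
            · exact Or.inl hR2
          · rw [hR.1, hR.2] at hR2
            rw [hR.2]
            simp only [Rg] at hR2 ⊢
            rcases hR2 with h2 | ⟨h2, -⟩ <;> rw [h2] <;> simp
      · have c1 := h'.chain 1 q le_rfl hq1 hqn (fun i hi hiq => hlow' i hi hiq)
        have c2 := h'.hE q hq1 hqn' hαq'
        have c3 := h'.hy q hq1 hqn' hβq
        have c4 := h'.hW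
        linarith
    · obtain rfl : q = n := by omega
      exact (forced_none st hT hO).elim
  | S =>
    cases hβq : β q with
    | false =>
      have hAB := h.Sl q hq1 hqn hαq hβq
      rcases Nat.lt_or_ge 1 q with h1 | h1
      · obtain ⟨c, rfl⟩ : ∃ c, q = c + 1 := ⟨q - 1, by omega⟩
        obtain ⟨hαc, hβc⟩ := hqmin c (by omega) (by omega)
        have e1 := h.hE c (by omega) (by omega) hαc
        have e2 := h.hl c (by omega) (by omega) hβc
        have h2c := two_le_pow c (by omega)
        obtain ⟨rfl, rfl, rfl⟩ := forced_stay st c (by omega) (by omega) hT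
          (fun j hj hjq => hOptlt j hj (by omega)) (by linarith) (by linarith)
          (hbd c (by omega) (by omega)) (by linarith)
        have b1 : ∀ j, j ≠ c → Function.update β c true j = β j := fun j hj =>
          Function.update_of_ne hj _ _
        refine BInv.I0 rfl hα ?_ ?_
        · intro j hj hjn
          rcases lt_trichotomy (j + 1) c with hj' | hj' | hj'
          · rw [b1 j (by omega), b1 (j + 1) (by omega)]; exact hr j hj hjn
          · obtain ⟨e3, e4⟩ := hqmin j hj (by omega)
            rw [b1 j (by omega), e3, e4, hj', hαc]
            simp [Rg]
          · rcases Nat.lt_or_ge c j with hj'' | hj''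
            · rw [b1 j (by omega), b1 (j + 1) (by omega)]; exact hr j hj hjn
            · obtain rfl : j = c := by omega
              rw [Function.update_self, b1 (j + 1) (by omega), hαc, hαq, hβq]
              simp [Rg]
        · have c1 := h'.chain 1 c le_rfl (by omega) (by omega) (fun i hi hiq => by
            rw [b1 i (by omega)]; exact hqmin i hi (by omega))
          have c2 := h'.hE c (by omega) (by omega) hαc
          have c3 := h'.hy c (by omega) (by omega) (Function.update_self _ _ _)
          have c4 := h'.hW
          have c5 := (agree h h' (c + 1) (by omega) (fun j hj => hr j (by omega))
            (fun _ _ _ => rfl) (fun j hj _ => b1 j (by omega)) (c + 1) le_rfl hqn).1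
          have : (2 : ℚ) ^ (c + 1) = 2 * 2 ^ c := by ring
          linarith
      · obtain rfl : q = 1 := by omega
        obtain ⟨rfl, rfl, rfl⟩ := forced_enter st 1 le_rfl hn1 hT
          (fun j hj hjq => by omega) (by linarith)
        have a1 : ∀ j, j ≠ 1 → Function.update α 1 AS.E j = α j := fun j hj =>
          Function.update_of_ne hj _ _
        have hB' : B' 1 = B 1 := agreeB h h' 1 le_rfl hn1 hr (fun j hj _ => a1 j (by omega))
          (fun _ _ _ => rfl)
        refine BInv.I0 rfl (by rw [Function.update_self]; simp) ?_ ?_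
        · intro j hj hjn
          rcases Nat.lt_or_ge 1 j with hj' | hj'
          · rw [a1 j (by omega), a1 (j + 1) (by omega)]; exact hr j hj hjn
          · obtain rfl : j = 1 := by omega
            have hR := hr 1 le_rfl hn1
            rw [a1 (1 + 1) (by omega), Function.update_self, hβq]
            rw [hαq, hβq] at hR
            simp only [Rg] at hR ⊢
            rcases hR with h2 | ⟨h2, -⟩ <;> rw [h2] <;> simp
        · have c2 := h'.hE 1 le_rfl hn1 (Function.update_self _ _ _)
          have c4 := h'.hW
          norm_num at c2
          linarith
    | true =>
      have hqn' : q ≤ n := by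
        by_contra hc
        obtain rfl : q = n + 1 := by omega
        rw [h.β0] at hβq; cases hβq
      have hR := hr q hq1 hqn'
      rw [hαq, hβq] at hR
      simp only [Rg] at hR
      have hq1n := h.le_n (q + 1) (by omega) (by rw [hR]; simp)
      have e1 := h.hS q hq1 hqn' hαq
      have e2 := h.hy q hq1 hqn' hβq
      have e3 := h.hE (q + 1) (by omega) hq1n hR
      have h2q' : (2 : ℚ) ^ (q + 1) = 2 * 2 ^ q := by ring
      obtain ⟨rfl, rfl, rfl⟩ := forced_leave st q hq1 hqn' hT (hOptall (by linarith))
        (by linarith) (by linarith) (hbd q hq1 le_rfl) (by linarith) (by linarith)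
      have b1 : ∀ j, j ≠ q → Function.update β q false j = β j := fun j hj =>
        Function.update_of_ne hj _ _
      refine BInv.I0 rfl hα ?_ ?_
      · intro j hj hjn
        rcases lt_trichotomy (j + 1) q with hj' | hj' | hj'
        · rw [b1 j (by omega), b1 (j + 1) (by omega)]; exact hr j hj hjn
        · obtain ⟨e3, e4⟩ := hqmin j hj (by omega)
          rw [b1 j (by omega), e3, e4, hj', hαq]
          simp [Rg]
        · rcases Nat.lt_or_ge q j with hj'' | hj''
          · rw [b1 j (by omega), b1 (j + 1) (by omega)]; exact hr j hj hjn
          · obtain rfl : j = q := by omega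
            rw [Function.update_self, b1 (j + 1) (by omega), hαq, hR]
            simp [Rg]
      · have c1 := h'.chain 1 q le_rfl (by omega) (by omega) (fun i hi hiq => by
          rw [b1 i (by omega)]; exact hqmin i hi (by omega))
        have c2 := h'.hS q hq1 hqn' hαq
        have c4 := h'.hW
        have c5 := (agree h h' (q + 1) (by omega) (fun j hj => hr j (by omega))
            (fun _ _ _ => rfl) (fun j hj _ => b1 j (by omega)) (q + 1) le_rfl (by omega)).2
            (by rw [hR]; simp)
        linarith

theorem step_I1 (h : Bell n p α β A B W) (h' : Bell n p' α' β' A' B' W')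
    (st : AbsStep n p α β A B W p' α' β')
    (i : ℕ) (h1 : 1 ≤ i) (hi : i + 1 ≤ n) (hp : p = 1)
    (hlow : ∀ j, 1 ≤ j → j < i → α j = AS.E ∧ β j = false) (hαi : α i = AS.E)
    (hβi : β i = true) (hα : α (i + 1) = AS.E) (hr : Reg n α β (i + 1)) (hW : W ≤ K) :
    BInv n p' α' β' A' B' W' (K + 2) := by
  subst hp
  have hWA := h.hW
  have hch : ∀ j, 1 ≤ j → j ≤ i → A j = A i + 2 ^ i - 2 ^ j := fun j hj hjq =>
    h.chain j i hj hjq (by omega) (fun i hi hiq => hlow i (by omega) hiq)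
  have c1 := hch 1 le_rfl h1
  have c2 := h.hE i h1 (by omega) hαi
  have c3 := h.hy i h1 (by omega) hβi
  have c4 := h.hE (i + 1) (by omega) hi hα
  have c5 : (2 : ℚ) ^ (i + 1) = 2 * 2 ^ i := by ring
  norm_num at c1
  obtain ⟨rfl, rfl, rfl⟩ := forced_travel st (i + 1) (by omega) hi (fun j hj hji => by
    have := hch j hj (by omega)
    have := two_le_pow j hj
    linarith) (by linarith)
  have ag := (agree h h' (i + 1) (by omega) hr (fun _ _ _ => rfl) (fun _ _ _ => rfl)
    (i + 1) le_rfl (by omega)).2 (by rw [hα]; simp)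
  have := h'.hW
  exact BInv.I2 0 i (by omega) hi rfl (fun j h1 h2 => by omega) (fun j h1 h2 => hlow j h1 h2)
    hαi hβi hα hr (by linarith)

theorem step_I2 (h : Bell n p α β A B W) (h' : Bell n p' α' β' A' B' W')
    (st : AbsStep n p α β A B W p' α' β')
    (k c : ℕ) (hk : k + 1 ≤ c) (hc : c + 1 ≤ n) (hp : p = c + 1)
    (hlow : ∀ j, 1 ≤ j → j ≤ k → α j = AS.B ∧ β j = false)
    (hmid : ∀ j, k < j → j < c → α j = AS.E ∧ β j = false)
    (hαc : α c = AS.E) (hβc : β c = true) (hα : α (c + 1) = AS.E) (hr : Reg n α β (c + 1))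
    (hW : W ≤ K) : BInv n p' α' β' A' B' W' (K + 2) := by
  subst hp
  have hWA := h.hW
  have c1 := h.hE c (by omega) (by omega) hαc
  have c2 := h.hy c (by omega) (by omega) hβc
  have c3 := h.hE (c + 1) (by omega) hc hα
  have c4 : (2 : ℚ) ^ (c + 1) = 2 * 2 ^ c := by ring
  have vmid : ∀ j, k < j → j ≤ c → A j = W - 2 ^ j + 3 / 4 := by
    intro j hj hjc
    rw [h.chain j c (by omega) hjc (by omega) (fun i hi hic => hmid i (by omega) hic)]
    linarith
  have vlow : ∀ j, 1 ≤ j → j ≤ k → A j = W - 2 ^ j + 5 / 4 := fun j hj hjk =>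
    h.hB j hj (by omega) (hlow j hj hjk).1
  have vle : ∀ j, 1 ≤ j → j ≤ c → A j ≤ W - 2 ^ j + 5 / 4 := by
    intro j hj hjc
    rcases Nat.lt_or_ge k j with h1 | h1
    · linarith [vmid j h1 hjc]
    · linarith [vlow j hj h1]
  have hT : ∀ j, 1 ≤ j → j ≤ n → A j ≤ W := by
    intro j hj hjn
    rcases Nat.lt_or_ge c j with h1 | h1
    · exact (h.mono (c + 1) (by omega) hr (fun hb => by rw [hα] at hb; cases hb) hWA.ge j h1
        (by omega)).2
    · linarith [vle j hj h1, two_le_pow j hj]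
  have hO : ∀ j, 1 ≤ j → j < k + 1 → Opt A B W j := by
    intro j hj hjk
    have e1 := vlow j hj (by omega)
    have e2 := h.hl j hj (by omega) (hlow j hj (by omega)).2
    have e3 := vle (j + 1) (by omega) (by omega)
    have e4 : (2 : ℚ) ^ (j + 1) = 2 * 2 ^ j := by ring
    have e5 := two_le_pow j hj
    have e6 : 3 / 4 + B (j + 1) ≤ A (j + 1) := by
      rcases Nat.lt_or_ge k (j + 1) with h1 | h1
      · have hE : α (j + 1) = AS.E := by
          rcases Nat.lt_or_ge (j + 1) c with h2 | h2
          · exact (hmid (j + 1) h1 h2).1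
          · obtain rfl : c = j + 1 := by omega
            exact hαc
        linarith [h.hE (j + 1) (by omega) (by omega) hE]
      · have f1 := vlow (j + 1) (by omega) h1
        have f2 := h.hl (j + 1) (by omega) (by omega) (hlow (j + 1) (by omega) h1).2
        have f3 := vle (j + 1 + 1) (by omega) (by omega)
        have f4 : (2 : ℚ) ^ (j + 1 + 1) = 4 * 2 ^ j := by ring
        linarith
    exact ⟨by linarith, by linarith, by linarith, by linarith, by linarith⟩
  have hW2 : ∀ (q : ℕ), q = c + 1 → (∀ j, c + 1 ≤ j → j ≤ n → α' j = α j) →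
      (∀ j, c + 1 ≤ j → j ≤ n → β' j = β j) → A' q = W := by
    intro q hq ha hb
    subst hq
    rw [hWA]
    exact (agree h h' (c + 1) (by omega) hr ha hb (c + 1) le_rfl (by omega)).2 (by rw [hα]; simp)
  rcases Nat.lt_or_ge (k + 1) c with hkc | hkc
  · obtain ⟨m1, m2⟩ := hmid (k + 1) (by omega) hkc
    have d1 := vmid (k + 1) (by omega) hk
    have d2 := vle (k + 1 + 1) (by omega) (by omega)
    have d3 : (2 : ℚ) ^ (k + 1 + 1) = 2 * 2 ^ (k + 1) := by ring
    have d4 := two_le_pow (k + 1) (by omega)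
    obtain ⟨rfl, rfl, rfl⟩ := forced_board st (k + 1) (by omega) (by omega) hT hO
      (h.hE (k + 1) (by omega) (by omega) m1).ge (by linarith) (by linarith)
    have a1 : ∀ j, j ≠ k + 1 → Function.update α (k + 1) AS.B j = α j := fun j hj =>
      Function.update_of_ne hj _ _
    refine BInv.I2 (k + 1) c (by omega) hc rfl ?_ ?_ (by rw [a1 c (by omega), hαc]) hβc
      (by rw [a1 (c + 1) (by omega), hα]) ?_ ?_
    · intro j hj hjk
      rcases Nat.lt_or_ge k j with h1 | h1
      · obtain rfl : j = k + 1 := by omega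
        exact ⟨Function.update_self _ _ _, m2⟩
      · rw [a1 j (by omega)]; exact hlow j hj h1
    · intro j hj hjc
      rw [a1 j (by omega)]; exact hmid j (by omega) hjc
    · intro j hj hjn
      rw [a1 j (by omega), a1 (j + 1) (by omega)]; exact hr j hj hjn
    · have := hW2 (c + 1) rfl (fun j hj _ => a1 j (by omega)) (fun _ _ _ => rfl)
      linarith [h'.hW]
  · obtain rfl : c = k + 1 := by omega
    have d1 := vmid (k + 1) (by omega) le_rfl
    have d4 := two_le_pow (k + 1) (by omega)
    obtain ⟨rfl, rfl, rfl⟩ := forced_skip st (k + 1) (by omega) (by omega) hT hO c1.ge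
      (by linarith)
    have a1 : ∀ j, j ≠ k + 1 → Function.update α (k + 1) AS.S j = α j := fun j hj =>
      Function.update_of_ne hj _ _
    have hW3 := hW2 (k + 1 + 1) rfl (fun j hj _ => a1 j (by omega)) (fun _ _ _ => rfl)
    have hreg : Reg n (Function.update α (k + 1) AS.S) β' (k + 1) := by
      intro j hj hjn
      rcases Nat.lt_or_ge (k + 1) j with h1 | h1
      · rw [a1 j (by omega), a1 (j + 1) (by omega)]; exact hr j h1 hjn
      · obtain rfl : j = k + 1 := by omega
        rw [Function.update_self, a1 (k + 1 + 1) (by omega), hβc, hα]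
        simp [Rg]
    rcases Nat.eq_zero_or_pos k with rfl | hkpos
    · exact BInv.I5 hc rfl (Function.update_self _ _ _) (by rw [a1 2 (by omega)]; exact hα) hreg
        (by linarith [h'.hW])
    · obtain ⟨e, rfl⟩ : ∃ e, k = e + 1 := ⟨k - 1, by omega⟩
      obtain ⟨l1, l2⟩ := hlow (e + 1) (by omega) le_rfl
      have v1 := h'.hl (e + 1) (by omega) (by omega) l2
      have v2 := h'.hS (e + 1 + 1) (by omega) (by omega) (Function.update_self _ _ _)
      have v3 := h'.hW
      refine BInv.I3 e (e + 1 + 1) (by omega) hc rfl ?_ ?_ (Function.update_self _ _ _)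
        (by rw [a1 _ (by omega)]; exact hα) ?_ ?_ ?_
      · intro j hj hjc
        rw [a1 j (by omega)]; exact (hlow j hj (by omega)).1
      · intro j hj hje
        exact (hlow j hj (by omega)).2
      · intro j hj hjn
        rcases Nat.lt_or_ge (e + 1) j with h1 | h1
        · exact hreg j h1 hjn
        · obtain rfl : j = e + 1 := by omega
          rw [a1 (e + 1) (by omega), Function.update_self, l1, l2, hβc]
          simp [Rg]
      · linarith
      · linarith

theorem step_I3 (h : Bell n p α β A B W) (h' : Bell n p' α' β' A' B' W')
    (st : AbsStep n p α β A B W p' α' β')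
    (k c : ℕ) (hk : k + 2 ≤ c) (hc : c + 1 ≤ n) (hp : p = c + 1)
    (hlow : ∀ j, 1 ≤ j → j < c → α j = AS.B) (hβ : ∀ j, 1 ≤ j → j ≤ k → β j = false)
    (hαc : α c = AS.S) (hα : α (c + 1) = AS.E) (hr : Reg n α β (k + 1))
    (hW : W ≤ B (k + 1)) (hK : B (k + 1) ≤ K) : BInv n p' α' β' A' B' W' (K + 2) := by
  subst hp
  have hWA := h.hW
  have vlow : ∀ j, 1 ≤ j → j < c → A j = W - 2 ^ j + 5 / 4 := fun j hj hjc =>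
    h.hB j hj (by omega) (hlow j hj hjc)
  have vc := h.hS c (by omega) (by omega) hαc
  have hT : ∀ j, 1 ≤ j → j ≤ n → A j ≤ W := by
    intro j hj hjn
    rcases Nat.lt_or_ge j c with h1 | h1
    · linarith [vlow j hj h1, two_le_pow j hj]
    · exact (h.mono c (by omega) (fun j hj => hr j (by omega))
        (fun hb => by rw [hαc] at hb; cases hb) (by linarith) j h1 (by omega)).2
  have vB : ∀ j, 1 ≤ j → j ≤ k → B j = W - 2 ^ (j + 1) + 5 / 4 := fun j hj hjk => by
    rw [h.hl j hj (by omega) (hβ j hj hjk), vlow (j + 1) (by omega) (by omega)]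
  have hO : ∀ j, 1 ≤ j → j < k → Opt A B W j := by
    intro j hj hjk
    have e1 := vlow j hj (by omega)
    have e2 := vB j hj (by omega)
    have e3 := vlow (j + 1) (by omega) (by omega)
    have e4 := vB (j + 1) (by omega) (by omega)
    have e5 : (2 : ℚ) ^ (j + 1) = 2 * 2 ^ j := by ring
    have e6 : (2 : ℚ) ^ (j + 1 + 1) = 4 * 2 ^ j := by ring
    have e7 := two_le_pow j hj
    exact ⟨by linarith, by linarith, by linarith, by linarith, by linarith⟩
  have hagA : (∀ j, k + 1 + 1 ≤ j → j ≤ n → α' j = α j) →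
      (∀ j, k + 1 ≤ j → j ≤ n → β' j = β j) → A' (c + 1) = W := by
    intro ha hb
    rw [hWA]
    exact (agree h h' (k + 1 + 1) (by omega) (fun j hj => hr j (by omega)) ha
      (fun j hj => hb j (by omega)) (c + 1) (by omega) (by omega)).2 (by rw [hα]; simp)
  rcases Nat.eq_zero_or_pos k with rfl | hkpos
  · have e1 := vlow 1 le_rfl (by omega)
    obtain ⟨rfl, rfl, rfl⟩ := forced_enter st 1 le_rfl (by omega) hT
      (fun j hj hj1 => by omega) (by
        norm_num at e1 ⊢
        norm_num at hW
        linarith)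
    have a1 : ∀ j, j ≠ 1 → Function.update α 1 AS.E j = α j := fun j hj =>
      Function.update_of_ne hj _ _
    have hB' : B' 1 = B 1 := agreeB h h' 1 le_rfl (by omega) hr (fun j hj _ => a1 j (by omega))
          (fun _ _ _ => rfl)
    have hA' := hagA (fun j hj _ => a1 j (by omega)) (fun _ _ _ => rfl)
    have hE' := h'.hE 1 le_rfl (by omega) (Function.update_self _ _ _)
    norm_num at hE' hW hK
    refine BInv.I4 (Function.update_self _ _ _) ?_ ?_ ?_
    · intro j hj hjn
      rcases Nat.lt_or_ge 1 j with hj' | hj'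
      · rw [a1 j (by omega), a1 (j + 1) (by omega)]; exact hr j hj hjn
      · obtain rfl : j = 1 := by omega
        have hR := hr 1 le_rfl hjn
        rw [a1 (1 + 1) (by omega), Function.update_self]
        rw [hlow 1 le_rfl (by omega)] at hR
        cases hb : β' 1 <;> rw [hb] at hR <;> simp only [Rg] at hR ⊢
        · rw [hR.1]; simp
        · exact Or.inl hR
    · linarith [h'.hW]
    · linarith
  · obtain ⟨e, rfl⟩ : ∃ e, k = e + 1 := ⟨k - 1, by omega⟩
    have e1 := vlow (e + 1) (by omega) (by omega)
    have e2 := vB (e + 1) (by omega) le_rfl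
    have e3 := vlow (e + 1 + 1) (by omega) (by omega)
    have e5 : (2 : ℚ) ^ (e + 1 + 1) = 2 * 2 ^ (e + 1) := by ring
    have e7 := two_le_pow (e + 1) (by omega)
    obtain ⟨rfl, rfl, rfl⟩ := forced_stay st (e + 1) (by omega) (by omega) hT hO
      (by linarith) (by linarith) (by linarith) (by linarith)
    have b1 : ∀ j, j ≠ e + 1 → Function.update β (e + 1) true j = β j := fun j hj =>
      Function.update_of_ne hj _ _
    have hA' := hagA (fun _ _ _ => rfl) (fun j hj _ => b1 j (by omega))
    have hB' := (agree h h' (e + 1 + 1) (by omega) hr (fun _ _ _ => rfl)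
      (fun j hj _ => b1 j (by omega)) (e + 1 + 1) le_rfl (by omega)).1
    have hB1 := h'.hy (e + 1) (by omega) (by omega) (Function.update_self _ _ _)
    refine BInv.I3 e c (by omega) hc rfl hlow ?_ hαc hα ?_ ?_ ?_
    · intro j hj hje
      rw [b1 j (by omega)]; exact hβ j hj (by omega)
    · intro j hj hjn
      rcases Nat.lt_or_ge (e + 1) j with h1 | h1
      · rw [b1 j (by omega), b1 (j + 1) (by omega)]; exact hr j h1 hjn
      · obtain rfl : j = e + 1 := by omega
        rw [Function.update_self, hlow (e + 1) (by omega) (by omega),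
          hlow (e + 1 + 1) (by omega) (by omega)]
        simp [Rg]
    · linarith [h'.hW]
    · linarith

theorem step_I4 (h : Bell n p α β A B W) (h' : Bell n p' α' β' A' B' W')
    (st : AbsStep n p α β A B W p' α' β')
    (hα : α 1 = AS.E) (hr : Reg n α β 1) (hW : W < A 1) (hK : A 1 ≤ K) :
    BInv n p' α' β' A' B' W' (K + 2) := by
  have hn1 : 1 ≤ n := h.p1.trans h.pn
  obtain ⟨rfl, rfl, rfl⟩ := forced_travel st 1 le_rfl hn1 (fun j hj hj1 => by omega) hW
  have ag := (agree h h' 1 le_rfl hr (fun _ _ _ => rfl) (fun _ _ _ => rfl) 1 le_rfl (by omega)).2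
    (by rw [hα]; simp)
  exact BInv.I0 rfl (by rw [hα]; simp) hr (by linarith [h'.hW])

theorem step_I5 (h : Bell n p α β A B W) (h' : Bell n p' α' β' A' B' W')
    (st : AbsStep n p α β A B W p' α' β')
    (hn : 2 ≤ n) (hp : p = 2) (hα1 : α 1 = AS.S) (hα2 : α 2 = AS.E) (hr : Reg n α β 1)
    (hW : W ≤ K) : BInv n p' α' β' A' B' W' (K + 2) := by
  subst hp
  have hWA := h.hW
  have e1 := h.hS 1 le_rfl (by omega) hα1
  have e2 := h.hE 2 (by omega) hn hα2
  norm_num at e1 e2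
  have hT : ∀ j, 1 ≤ j → j ≤ n → A j ≤ W := fun j hj hjn =>
    (h.mono 1 le_rfl hr (fun hb => by rw [hα1] at hb; cases hb) (by linarith) j hj (by omega)).2
  have hag : (∀ j, 2 ≤ j → j ≤ n → α' j = α j) → (∀ j, 2 ≤ j → j ≤ n → β' j = β j) →
      A' 2 = W := by
    intro ha hb
    rw [hWA]
    exact (agree h h' 2 (by omega) (fun j hj => hr j (by omega)) ha hb 2 le_rfl (by omega)).2
      (by rw [hα2]; simp)
  cases hβ1 : β 1
  · have e3 := h.hl 1 le_rfl (by omega) hβ1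
    norm_num at e3
    obtain ⟨rfl, rfl, rfl⟩ := forced_enter st 1 le_rfl (by omega) hT (fun j hj hj1 => by omega)
      (by linarith)
    have a1 : ∀ j, j ≠ 1 → Function.update α 1 AS.E j = α j := fun j hj =>
      Function.update_of_ne hj _ _
    have hB' : B' 1 = B 1 := agreeB h h' 1 le_rfl (by omega) hr (fun j hj _ => a1 j (by omega))
      (fun _ _ _ => rfl)
    have hA' := hag (fun j hj _ => a1 j (by omega)) (fun _ _ _ => rfl)
    have hE' := h'.hE 1 le_rfl (by omega) (Function.update_self _ _ _)
    norm_num at hE'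
    refine BInv.I4 (Function.update_self _ _ _) ?_ ?_ ?_
    · intro j hj hjn
      rcases Nat.lt_or_ge 1 j with hj' | hj'
      · rw [a1 j (by omega), a1 (j + 1) (by omega)]; exact hr j hj hjn
      · obtain rfl : j = 1 := by omega
        rw [a1 (1 + 1) (by omega), Function.update_self, hβ1, hα2]
        simp [Rg]
    · linarith [h'.hW]
    · linarith
  · have e3 := h.hy 1 le_rfl (by omega) hβ1
    norm_num at e3
    obtain ⟨rfl, rfl, rfl⟩ := forced_leave st 1 le_rfl (by omega) hT (fun j hj hj1 => by omega)
      (by linarith) (by norm_num; linarith) (by linarith) (by norm_num; linarith)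
      (by norm_num; linarith)
    have b1 : ∀ j, j ≠ 1 → Function.update β 1 false j = β j := fun j hj =>
      Function.update_of_ne hj _ _
    have hA' := hag (fun _ _ _ => rfl) (fun j hj _ => b1 j (by omega))
    refine BInv.I5 hn rfl hα1 hα2 ?_ (by linarith [h'.hW])
    intro j hj hjn
    rcases Nat.lt_or_ge 1 j with hj' | hj'
    · rw [b1 j (by omega), b1 (j + 1) (by omega)]; exact hr j hj hjn
    · obtain rfl : j = 1 := by omega
      rw [Function.update_self, hα1, hα2]
      simp [Rg]

theorem step_Inv (h : Bell n p α β A B W) (h' : Bell n p' α' β' A' B' W')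
    (st : AbsStep n p α β A B W p' α' β') (inv : BInv n p α β A B W K) :
    BInv n p' α' β' A' B' W' (K + 2) := by
  cases inv with
  | I0 hp hα hr hW => exact step_I0 h h' st hp hα hr hW
  | I1 i h1 hi hp hlow hαi hβi hα hr hW =>
    exact step_I1 h h' st i h1 hi hp hlow hαi hβi hα hr hW
  | I2 k c hk hc hp hlow hmid hαc hβc hα hr hW =>
    exact step_I2 h h' st k c hk hc hp hlow hmid hαc hβc hα hr hW
  | I3 k c hk hc hp hlow hβ hαc hα hr hW hK =>
    exact step_I3 h h' st k c hk hc hp hlow hβ hαc hα hr hW hK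
  | I4 hα hr hW hK => exact step_I4 h h' st hα hr hW hK
  | I5 hn hp hα1 hα2 hr hW => exact step_I5 h h' st hn hp hα1 hα2 hr hW

theorem BInv.W_le (inv : BInv n p α β A B W K) : W ≤ K := by
  cases inv <;> linarith

/-- The final estimate. -/
theorem final_bound (h : Bell n p α β A B W) (hT : ∀ j, 1 ≤ j → j ≤ n → A j ≤ W)
    (hO : ∀ j, 1 ≤ j → j ≤ n → Opt A B W j) : (2 : ℚ) ^ (n + 1) - 2 ≤ W := by
  have hn1 : 1 ≤ n := h.p1.trans h.pn
  have key : ∀ j, j ≤ n + 1 → 1 ≤ j → (2 : ℚ) ^ (n + 1) - 2 ^ j ≤ A j := by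
    intro j hjn
    induction hjn using Nat.decreasingInduction with
    | self => intro _; rw [h.A0]; linarith
    | of_succ j hj ih =>
      intro hj1
      have e1 := ih (by omega)
      have e2 := (hO j hj1 (by omega)).enter
      have e3 := (hO j hj1 (by omega)).leave
      have e4 : (2 : ℚ) ^ (j + 1) = 2 * 2 ^ j := by ring
      linarith
  have := key 1 (by omega) le_rfl
  have := hT 1 le_rfl hn1
  linarith

end invariant

/-! ## From policies to configurations -/

/-- Target of the choice at `a i`. -/
def tgtA (n i : ℕ) : AS → BV
  | AS.E => BV.b i
  | AS.S => aN n (i + 1)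
  | AS.B => BV.t

/-- Target of the choice at `b i`. -/
def tgtB (n i : ℕ) : Bool → BV
  | true => bN n (i + 1)
  | false => aN n (i + 1)

/-- The policy `π` is represented by the configuration `p, α, β`. -/
structure PRep (n : ℕ) (π : BV → BV) (p : ℕ) (α : ℕ → AS) (β : ℕ → Bool) : Prop where
  p1 : 1 ≤ p
  pn : p ≤ n
  ht : π BV.t = BV.a p
  hd : π BV.d = BV.s
  hs : π BV.s = BV.s
  ha : ∀ i, 1 ≤ i → i ≤ n → π (BV.a i) = tgtA n i (α i)
  hb : ∀ i, 1 ≤ i → i ≤ n → π (BV.b i) = tgtB n i (β i)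
  α0 : α (n + 1) = AS.S
  β0 : β (n + 1) = false

theorem aN_of_le {n i : ℕ} (h : i ≤ n) : aN n i = BV.a i := by
  unfold aN; rw [if_neg (by omega)]

theorem bN_of_le {n i : ℕ} (h : i ≤ n) : bN n i = BV.b i := by
  unfold bN; rw [if_neg (by omega)]

theorem aN_last (n : ℕ) : aN n (n + 1) = BV.s := by simp [aN]

theorem bN_last (n : ℕ) : bN n (n + 1) = BV.d := by simp [bN]

theorem rB_skip (n i : ℕ) : rB n (BV.a i) (aN n (i + 1)) = 0 := by
  unfold aN; split_ifs <;> simp [rB]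

theorem rB_leave (n i : ℕ) : rB n (BV.b i) (aN n (i + 1)) = 0 := by
  unfold aN; split_ifs <;> simp [rB]

theorem rB_stay (n i : ℕ) : rB n (BV.b i) (bN n (i + 1)) = 3 / 4 := by
  unfold bN; split_ifs with h
  · have : i = n := by omega
    simp [rB, this]
  · simp [rB]

theorem rB_enter (n i : ℕ) : rB n (BV.a i) (BV.b i) = 2 ^ i := by simp [rB]

theorem rB_board (n i : ℕ) : rB n (BV.a i) BV.t = -(2 ^ i) + 5 / 4 := by simp [rB]

theorem rB_travel (n i : ℕ) : rB n BV.t (BV.a i) = 0 := by simp [rB]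

theorem NB_skip (n i : ℕ) : NB n (BV.a i) (aN n (i + 1)) = n + 2 + 5 * (i - 1) := by
  unfold aN; split_ifs <;> simp [NB]

theorem NB_leave (n i : ℕ) : NB n (BV.b i) (aN n (i + 1)) = n + 5 + 5 * (i - 1) := by
  unfold aN; split_ifs <;> simp [NB]

theorem NB_stay (n i : ℕ) : NB n (BV.b i) (bN n (i + 1)) = n + 4 + 5 * (i - 1) := by
  unfold bN; split_ifs <;> simp [NB]

theorem BVal_s (n : ℕ) (π : BV → BV) : BVal n π BV.s = 0 := by
  classical
  have h : ∃ k, π^[k] BV.s = BV.s := ⟨0, rfl⟩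
  unfold BVal
  rw [dif_pos h]
  have h0 : Nat.find h = 0 := (Nat.find_eq_zero h).2 rfl
  simp [h0]

theorem BVal_step (n : ℕ) (π : BV → BV) (u : BV) (hu : u ≠ BV.s) (h : ∃ k, π^[k] u = BV.s) :
    BVal n π u = rB n u (π u) + BVal n π (π u) := by
  classical
  have h' : ∃ k, π^[k] (π u) = BV.s := by
    obtain ⟨k, hk⟩ := h
    cases k with
    | zero => exact absurd hk hu
    | succ k => exact ⟨k, hk⟩
  have hf : Nat.find h = Nat.find h' + 1 := Nat.find_comp_succ h h' hu
  unfold BVal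
  rw [dif_pos h, dif_pos h']
  rw [hf, Finset.sum_range_succ', add_comm]
  rfl

theorem PRep.policy {n : ℕ} {π : BV → BV} {p : ℕ} {α : ℕ → AS} {β : ℕ → Bool}
    (h : PRep n π p α β) : IsBPolicy n π := by
  intro u hu
  cases u with
  | t => exact Or.inl ⟨p, h.p1, h.pn, rfl, h.ht⟩
  | s => simp [BEdge, h.hs]
  | d => simp [BEdge, h.hd]
  | a i =>
    obtain ⟨h1, h2⟩ := hu
    rw [h.ha i h1 h2]
    cases α i
    · exact Or.inr (Or.inl ⟨i, h1, h2, rfl, rfl⟩)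
    · exact Or.inr (Or.inr (Or.inl ⟨i, h1, h2, rfl, rfl⟩))
    · exact Or.inr (Or.inr (Or.inr (Or.inl ⟨i, h1, h2, rfl, rfl⟩)))
  | b i =>
    obtain ⟨h1, h2⟩ := hu
    rw [h.hb i h1 h2]
    cases β i
    · exact Or.inr (Or.inr (Or.inr (Or.inr (Or.inr (Or.inl ⟨i, h1, h2, rfl, rfl⟩)))))
    · exact Or.inr (Or.inr (Or.inr (Or.inr (Or.inl ⟨i, h1, h2, rfl, rfl⟩))))

theorem PRep.bell {n : ℕ} {π : BV → BV} {p : ℕ} {α : ℕ → AS} {β : ℕ → Bool}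
    (h : PRep n π p α β) (hu : BWeakUnichain n π) :
    Bell n p α β (fun i => BVal n π (aN n i)) (fun i => BVal n π (bN n i)) (BVal n π BV.t) where
  p1 := h.p1
  pn := h.pn
  hW := by
    rw [BVal_step n π BV.t (by simp) (hu _ trivial), h.ht, rB_travel, aN_of_le h.pn, zero_add]
  A0 := by simp only [aN_last, BVal_s]
  B0 := by
    simp only [bN_last]
    rw [BVal_step n π BV.d (by simp) (hu _ trivial), h.hd, BVal_s]
    simp [rB]
  α0 := h.α0
  β0 := h.β0
  hE := by
    intro i h1 h2 hα
    simp only [aN_of_le h2, bN_of_le h2]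
    rw [BVal_step n π (BV.a i) (by simp) (hu _ ⟨h1, h2⟩), h.ha i h1 h2, hα, tgtA, rB_enter]
  hS := by
    intro i h1 h2 hα
    simp only [aN_of_le h2]
    rw [BVal_step n π (BV.a i) (by simp) (hu _ ⟨h1, h2⟩), h.ha i h1 h2, hα, tgtA, rB_skip, zero_add]
  hB := by
    intro i h1 h2 hα
    simp only [aN_of_le h2]
    rw [BVal_step n π (BV.a i) (by simp) (hu _ ⟨h1, h2⟩), h.ha i h1 h2, hα, tgtA, rB_board]
    ring
  hl := by
    intro i h1 h2 hβ
    simp only [bN_of_le h2]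
    rw [BVal_step n π (BV.b i) (by simp) (hu _ ⟨h1, h2⟩), h.hb i h1 h2, hβ, tgtB, rB_leave,
      zero_add]
  hy := by
    intro i h1 h2 hβ
    simp only [bN_of_le h2]
    rw [BVal_step n π (BV.b i) (by simp) (hu _ ⟨h1, h2⟩), h.hb i h1 h2, hβ, tgtB, rB_stay]

/-! ### Weak unichain policies stay weak unichain -/

/-- A potential showing that `𝔅_n` has no cycles of positive reward. -/
def hpot (n : ℕ) : BV → ℚ
  | BV.t => -2
  | BV.a i => -2 ^ i
  | BV.b i => -2 ^ (i + 1)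
  | BV.d => -2 ^ (n + 2)
  | BV.s => -2 ^ (n + 2)

theorem hpot_aN (n i : ℕ) : hpot n (aN n i) ≤ -2 ^ i := by
  unfold aN
  split_ifs with h
  · subst h
    have : (0 : ℚ) < 2 ^ n := by positivity
    simp only [hpot, pow_succ]
    linarith
  · simp [hpot]

theorem hpot_bN (n i : ℕ) : hpot n (bN n i) ≤ -2 ^ (i + 1) := by
  unfold bN
  split_ifs with h
  · subst h; simp [hpot]
  · simp [hpot]

theorem hpot_edge (n : ℕ) (u v : BV) (h : BEdge n u v) : rB n u v + hpot n v - hpot n u ≤ 0 := by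
  rcases h with ⟨i, h1, h2, rfl, rfl⟩ | ⟨i, h1, h2, rfl, rfl⟩ | ⟨i, h1, h2, rfl, rfl⟩ |
    ⟨i, h1, h2, rfl, rfl⟩ | ⟨i, h1, h2, rfl, rfl⟩ | ⟨i, h1, h2, rfl, rfl⟩ | ⟨rfl, rfl⟩ | ⟨rfl, rfl⟩
  · have := two_le_pow i h1
    simp only [rB_travel, hpot]; linarith
  · simp only [rB_enter, hpot, pow_succ]; linarith
  · have := hpot_aN n (i + 1)
    have h3 := two_le_pow i h1
    rw [pow_succ] at this
    simp only [rB_skip]; rw [show hpot n (BV.a i) = -2 ^ i from rfl]; linarith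
  · simp only [rB_board, hpot]; linarith
  · have := hpot_bN n (i + 1)
    have h3 := two_le_pow i h1
    rw [pow_succ, pow_succ] at this
    simp only [rB_stay]; rw [show hpot n (BV.b i) = -2 ^ (i + 1) from rfl, pow_succ]; linarith
  · have := hpot_aN n (i + 1)
    simp only [rB_leave]; rw [show hpot n (BV.b i) = -2 ^ (i + 1) from rfl]; linarith
  · simp [rB, hpot]
  · simp [rB, hpot]

theorem vertex_of_edge (n : ℕ) (u v : BV) (h : BEdge n u v) : IsBVertex n v := by
  have ha : ∀ i, 1 ≤ i → i ≤ n → IsBVertex n (aN n (i + 1)) := by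
    intro i h1 h2
    unfold aN
    split_ifs
    · trivial
    · exact ⟨by omega, by omega⟩
  have hb : ∀ i, 1 ≤ i → i ≤ n → IsBVertex n (bN n (i + 1)) := by
    intro i h1 h2
    unfold bN
    split_ifs
    · trivial
    · exact ⟨by omega, by omega⟩
  rcases h with ⟨i, h1, h2, rfl, rfl⟩ | ⟨i, h1, h2, rfl, rfl⟩ | ⟨i, h1, h2, rfl, rfl⟩ |
    ⟨i, h1, h2, rfl, rfl⟩ | ⟨i, h1, h2, rfl, rfl⟩ | ⟨i, h1, h2, rfl, rfl⟩ | ⟨rfl, rfl⟩ | ⟨rfl, rfl⟩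
  · exact ⟨h1, h2⟩
  · exact ⟨h1, h2⟩
  · exact ha i h1 h2
  · trivial
  · exact hb i h1 h2
  · exact ha i h1 h2
  · trivial
  · trivial

theorem iter_update (π : BV → BV) (u v x : BV) (k : ℕ) (h : ∀ i < k, π^[i] x ≠ u) :
    (Function.update π u v)^[k] x = π^[k] x := by
  induction k with
  | zero => rfl
  | succ k ih =>
    rw [Function.iterate_succ_apply', Function.iterate_succ_apply',
      ih (fun i hi => h i (by omega)), Function.update_of_ne (h k (by omega))]

theorem unichain_step (n : ℕ) (π : BV → BV) (hp : IsBPolicy n π) (hs : π BV.s = BV.s)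
    (hu : BWeakUnichain n π) (u v : BV) (himp : BImproving n π u v) :
    BWeakUnichain n (Function.update π u v) := by
  classical
  have hmono : ∀ x, IsBVertex n x →
      BVal n π x - hpot n x ≤ BVal n π (π x) - hpot n (π x) := by
    intro x hx
    by_cases hxs : x = BV.s
    · subst hxs; rw [hs]
    · have e1 := BVal_step n π x hxs (hu x hx)
      have e2 := hpot_edge n x (π x) (hp x hx)
      linarith
  have hit : ∀ x, IsBVertex n x → ∀ k, IsBVertex n (π^[k] x) ∧
      BVal n π x - hpot n x ≤ BVal n π (π^[k] x) - hpot n (π^[k] x) := by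
    intro x hx k
    induction k with
    | zero => exact ⟨hx, le_rfl⟩
    | succ k ih =>
      rw [Function.iterate_succ_apply']
      exact ⟨vertex_of_edge n _ _ (hp _ ih.1), ih.2.trans (hmono _ ih.1)⟩
  have hv := vertex_of_edge n u v himp.1
  have hstrict : BVal n π u - hpot n u < BVal n π v - hpot n v := by
    have e1 := himp.2
    have e2 := hpot_edge n u v himp.1
    unfold zB at e1
    linarith
  have hvs : ∃ k, (Function.update π u v)^[k] v = BV.s := by
    obtain ⟨k, hk⟩ := hu v hv
    refine ⟨k, ?_⟩
    rw [iter_update π u v v k, hk]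
    intro i _ hi
    have := (hit v hv i).2
    rw [hi] at this
    linarith
  intro x hx
  by_cases hex : ∃ i, π^[i] x = u
  · obtain ⟨k, hk⟩ := hvs
    refine ⟨k + (1 + Nat.find hex), ?_⟩
    rw [Function.iterate_add_apply, Function.iterate_add_apply,
      iter_update π u v x (Nat.find hex) (fun i hi => Nat.find_min hex hi), Nat.find_spec hex]
    rw [Function.iterate_one, Function.update_self, hk]
  · obtain ⟨k, hk⟩ := hu x hx
    exact ⟨k, by rw [iter_update π u v x k (fun i _ hi => hex ⟨i, hi⟩), hk]⟩

/-! ### Reduced costs -/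

section costs
variable (n : ℕ) (π : BV → BV)

theorem z_travel (i : ℕ) (h2 : i ≤ n) :
    zB n π BV.t (BV.a i) = BVal n π (aN n i) - BVal n π BV.t := by
  rw [zB, rB_travel, aN_of_le h2, zero_add]

theorem z_enter (i : ℕ) (h2 : i ≤ n) :
    zB n π (BV.a i) (BV.b i) = 2 ^ i + BVal n π (bN n i) - BVal n π (aN n i) := by
  rw [zB, rB_enter, aN_of_le h2, bN_of_le h2]

theorem z_skip (i : ℕ) (h2 : i ≤ n) :
    zB n π (BV.a i) (aN n (i + 1)) = BVal n π (aN n (i + 1)) - BVal n π (aN n i) := by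
  rw [zB, rB_skip, aN_of_le h2, zero_add]

theorem z_board (i : ℕ) (h2 : i ≤ n) :
    zB n π (BV.a i) BV.t = BVal n π BV.t - 2 ^ i + 5 / 4 - BVal n π (aN n i) := by
  rw [zB, rB_board, aN_of_le h2]; ring

theorem z_stay (i : ℕ) (h2 : i ≤ n) :
    zB n π (BV.b i) (bN n (i + 1)) = 3 / 4 + BVal n π (bN n (i + 1)) - BVal n π (bN n i) := by
  rw [zB, rB_stay, bN_of_le h2]

theorem z_leave (i : ℕ) (h2 : i ≤ n) :
    zB n π (BV.b i) (aN n (i + 1)) = BVal n π (aN n (i + 1)) - BVal n π (bN n i) := by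
  rw [zB, rB_leave, bN_of_le h2, zero_add]

end costs

section edges
variable {n i : ℕ} (h1 : 1 ≤ i) (h2 : i ≤ n)

theorem edge_travel (h1 : 1 ≤ i) (h2 : i ≤ n) : BEdge n BV.t (BV.a i) :=
  Or.inl ⟨i, h1, h2, rfl, rfl⟩

theorem edge_enter (h1 : 1 ≤ i) (h2 : i ≤ n) : BEdge n (BV.a i) (BV.b i) :=
  Or.inr (Or.inl ⟨i, h1, h2, rfl, rfl⟩)

theorem edge_skip (h1 : 1 ≤ i) (h2 : i ≤ n) : BEdge n (BV.a i) (aN n (i + 1)) :=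
  Or.inr (Or.inr (Or.inl ⟨i, h1, h2, rfl, rfl⟩))

theorem edge_board (h1 : 1 ≤ i) (h2 : i ≤ n) : BEdge n (BV.a i) BV.t :=
  Or.inr (Or.inr (Or.inr (Or.inl ⟨i, h1, h2, rfl, rfl⟩)))

theorem edge_stay (h1 : 1 ≤ i) (h2 : i ≤ n) : BEdge n (BV.b i) (bN n (i + 1)) :=
  Or.inr (Or.inr (Or.inr (Or.inr (Or.inl ⟨i, h1, h2, rfl, rfl⟩))))

theorem edge_leave (h1 : 1 ≤ i) (h2 : i ≤ n) : BEdge n (BV.b i) (aN n (i + 1)) :=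
  Or.inr (Or.inr (Or.inr (Or.inr (Or.inr (Or.inl ⟨i, h1, h2, rfl, rfl⟩)))))

end edges

theorem rep_updateA {n : ℕ} {π : BV → BV} {p : ℕ} {α : ℕ → AS} {β : ℕ → Bool}
    (h : PRep n π p α β) (i : ℕ) (h2 : i ≤ n) (x : AS) :
    PRep n (Function.update π (BV.a i) (tgtA n i x)) p (Function.update α i x) β where
  p1 := h.p1
  pn := h.pn
  ht := by rw [Function.update_of_ne (by simp)]; exact h.ht
  hd := by rw [Function.update_of_ne (by simp)]; exact h.hd
  hs := by rw [Function.update_of_ne (by simp)]; exact h.hs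
  ha := by
    intro j hj1 hj2
    by_cases hji : j = i
    · subst hji; rw [Function.update_self, Function.update_self]
    · rw [Function.update_of_ne (by simpa using hji), Function.update_of_ne hji]
      exact h.ha j hj1 hj2
  hb := by
    intro j hj1 hj2
    rw [Function.update_of_ne (by simp)]; exact h.hb j hj1 hj2
  α0 := by rw [Function.update_of_ne (by omega)]; exact h.α0
  β0 := h.β0

theorem rep_updateB {n : ℕ} {π : BV → BV} {p : ℕ} {α : ℕ → AS} {β : ℕ → Bool}
    (h : PRep n π p α β) (i : ℕ) (h2 : i ≤ n) (x : Bool) :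
    PRep n (Function.update π (BV.b i) (tgtB n i x)) p α (Function.update β i x) where
  p1 := h.p1
  pn := h.pn
  ht := by rw [Function.update_of_ne (by simp)]; exact h.ht
  hd := by rw [Function.update_of_ne (by simp)]; exact h.hd
  hs := by rw [Function.update_of_ne (by simp)]; exact h.hs
  ha := by
    intro j hj1 hj2
    rw [Function.update_of_ne (by simp)]; exact h.ha j hj1 hj2
  hb := by
    intro j hj1 hj2
    by_cases hji : j = i
    · subst hji; rw [Function.update_self, Function.update_self]
    · rw [Function.update_of_ne (by simpa using hji), Function.update_of_ne hji]
      exact h.hb j hj1 hj2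
  α0 := h.α0
  β0 := by rw [Function.update_of_ne (by omega)]; exact h.β0

theorem rep_updateT {n : ℕ} {π : BV → BV} {p : ℕ} {α : ℕ → AS} {β : ℕ → Bool}
    (h : PRep n π p α β) (i : ℕ) (h1 : 1 ≤ i) (h2 : i ≤ n) :
    PRep n (Function.update π BV.t (BV.a i)) i α β where
  p1 := h1
  pn := h2
  ht := Function.update_self _ _ _
  hd := by rw [Function.update_of_ne (by simp)]; exact h.hd
  hs := by rw [Function.update_of_ne (by simp)]; exact h.hs
  ha := by
    intro j hj1 hj2
    rw [Function.update_of_ne (by simp)]; exact h.ha j hj1 hj2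
  hb := by
    intro j hj1 hj2
    rw [Function.update_of_ne (by simp)]; exact h.hb j hj1 hj2
  α0 := h.α0
  β0 := h.β0

theorem bland_abs {n : ℕ} {π π' : BV → BV} {p : ℕ} {α : ℕ → AS} {β : ℕ → Bool}
    (h : PRep n π p α β) (hu : BWeakUnichain n π) (hb : IsBlandStep n (NB n) π π') :
    ∃ p' α' β', PRep n π' p' α' β' ∧ BWeakUnichain n π' ∧
      AbsStep n p α β (fun i => BVal n π (aN n i)) (fun i => BVal n π (bN n i)) (BVal n π BV.t)
        p' α' β' := by
  obtain ⟨u, v, himp, hmin, rfl⟩ := hb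
  have hu' := unichain_step n π h.policy h.hs hu u v himp
  obtain ⟨hedge, hz⟩ := himp
  have key : ∀ u' v', BEdge n u' v' → NB n u' v' < NB n u v → zB n π u' v' ≤ 0 := by
    intro u' v' he hlt
    by_contra hc
    have := hmin u' v' ⟨he, not_le.1 hc⟩
    omega
  have kT : ∀ j, 1 ≤ j → j ≤ n → j < NB n u v → BVal n π (aN n j) ≤ BVal n π BV.t := by
    intro j h1 h2 hj
    have := key _ _ (edge_travel h1 h2) hj
    rw [z_travel n π j h2] at this; linarith
  have kE : ∀ j, 1 ≤ j → j ≤ n → n + 1 + 5 * (j - 1) < NB n u v →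
      2 ^ j + BVal n π (bN n j) ≤ BVal n π (aN n j) := by
    intro j h1 h2 hj
    have := key _ _ (edge_enter h1 h2) hj
    rw [z_enter n π j h2] at this; linarith
  have kS : ∀ j, 1 ≤ j → j ≤ n → n + 2 + 5 * (j - 1) < NB n u v →
      BVal n π (aN n (j + 1)) ≤ BVal n π (aN n j) := by
    intro j h1 h2 hj
    have := key _ _ (edge_skip h1 h2) (by rw [NB_skip]; exact hj)
    rw [z_skip n π j h2] at this; linarith
  have kB : ∀ j, 1 ≤ j → j ≤ n → n + 3 + 5 * (j - 1) < NB n u v →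
      BVal n π BV.t - 2 ^ j + 5 / 4 ≤ BVal n π (aN n j) := by
    intro j h1 h2 hj
    have := key _ _ (edge_board h1 h2) hj
    rw [z_board n π j h2] at this; linarith
  have kY : ∀ j, 1 ≤ j → j ≤ n → n + 4 + 5 * (j - 1) < NB n u v →
      3 / 4 + BVal n π (bN n (j + 1)) ≤ BVal n π (bN n j) := by
    intro j h1 h2 hj
    have := key _ _ (edge_stay h1 h2) (by rw [NB_stay]; exact hj)
    rw [z_stay n π j h2] at this; linarith
  have kL : ∀ j, 1 ≤ j → j ≤ n → n + 5 + 5 * (j - 1) < NB n u v →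
      BVal n π (aN n (j + 1)) ≤ BVal n π (bN n j) := by
    intro j h1 h2 hj
    have := key _ _ (edge_leave h1 h2) (by rw [NB_leave]; exact hj)
    rw [z_leave n π j h2] at this; linarith
  have kO : ∀ i, i ≤ n → n + 1 + 5 * (i - 1) ≤ NB n u v → ∀ j, 1 ≤ j → j < i →
      Opt (fun i => BVal n π (aN n i)) (fun i => BVal n π (bN n i)) (BVal n π BV.t) j := by
    intro i hi hN j h1 h2
    exact ⟨kE j h1 (by omega) (by omega), kS j h1 (by omega) (by omega),
      kB j h1 (by omega) (by omega), kY j h1 (by omega) (by omega),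
      kL j h1 (by omega) (by omega)⟩
  rcases hedge with ⟨i, h1, h2, rfl, rfl⟩ | ⟨i, h1, h2, rfl, rfl⟩ | ⟨i, h1, h2, rfl, rfl⟩ |
    ⟨i, h1, h2, rfl, rfl⟩ | ⟨i, h1, h2, rfl, rfl⟩ | ⟨i, h1, h2, rfl, rfl⟩ | ⟨rfl, rfl⟩ | ⟨rfl, rfl⟩
  · have hN : NB n BV.t (BV.a i) = i := rfl
    rw [hN] at kT
    rw [z_travel n π i h2] at hz
    exact ⟨i, α, β, rep_updateT h i h1 h2, hu', AbsStep.travel i h1 h2 (sub_pos.1 hz)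
      (fun j hj hji => kT j hj (by omega) hji)⟩
  · have hN : NB n (BV.a i) (BV.b i) = n + 1 + 5 * (i - 1) := rfl
    rw [hN] at kT kE kS kB kY kL kO
    rw [z_enter n π i h2] at hz
    exact ⟨p, _, β, rep_updateA h i h2 AS.E, hu', AbsStep.enter i h1 h2
      (fun j hj hji => kT j hj hji (by omega)) (kO i h2 (by omega)) (sub_pos.1 hz)⟩
  · rw [NB_skip] at kT kE kS kB kY kL kO
    rw [z_skip n π i h2] at hz
    exact ⟨p, _, β, rep_updateA h i h2 AS.S, hu', AbsStep.skip i h1 h2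
      (fun j hj hji => kT j hj hji (by omega)) (kO i h2 (by omega)) (kE i h1 h2 (by omega))
      (sub_pos.1 hz)⟩
  · have hN : NB n (BV.a i) BV.t = n + 3 + 5 * (i - 1) := rfl
    rw [hN] at kT kE kS kB kY kL kO
    rw [z_board n π i h2] at hz
    exact ⟨p, _, β, rep_updateA h i h2 AS.B, hu', AbsStep.board i h1 h2
      (fun j hj hji => kT j hj hji (by omega)) (kO i h2 (by omega)) (kE i h1 h2 (by omega))
      (kS i h1 h2 (by omega)) (sub_pos.1 hz)⟩
  · rw [NB_stay] at kT kE kS kB kY kL kO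
    rw [z_stay n π i h2] at hz
    exact ⟨p, α, _, rep_updateB h i h2 true, hu', AbsStep.stay i h1 h2
      (fun j hj hji => kT j hj hji (by omega)) (kO i h2 (by omega)) (kE i h1 h2 (by omega))
      (kS i h1 h2 (by omega)) (kB i h1 h2 (by omega)) (sub_pos.1 hz)⟩
  · rw [NB_leave] at kT kE kS kB kY kL kO
    rw [z_leave n π i h2] at hz
    exact ⟨p, α, _, rep_updateB h i h2 false, hu', AbsStep.leave i h1 h2
      (fun j hj hji => kT j hj hji (by omega)) (kO i h2 (by omega)) (kE i h1 h2 (by omega))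
      (kS i h1 h2 (by omega)) (kB i h1 h2 (by omega)) (kY i h1 h2 (by omega)) (sub_pos.1 hz)⟩
  · exfalso
    have e := BVal_step n π BV.d (by simp) (hu _ trivial)
    rw [h.hd] at e
    unfold zB at hz
    linarith
  · exfalso
    unfold zB at hz
    simp [rB] at hz

/-! ### The initial policy -/

theorem rep_pi0 (n : ℕ) (hn : 1 ≤ n) :
    PRep n (pi0 n) 1 (fun _ => AS.S) (fun _ => false) where
  p1 := le_rfl
  pn := hn
  ht := rfl
  hd := rfl
  hs := rfl
  ha := fun _ _ _ => rfl
  hb := fun _ _ _ => rfl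
  α0 := rfl
  β0 := rfl

theorem unichain_pi0 (n : ℕ) (hn : 1 ≤ n) : BWeakUnichain n (pi0 n) := by
  have hA : ∀ j, j ≤ n + 1 → ∃ k, (pi0 n)^[k] (aN n j) = BV.s := by
    intro j hj
    induction hj using Nat.decreasingInduction with
    | self => exact ⟨0, by simp [aN_last]⟩
    | of_succ j hj ih =>
      obtain ⟨k, hk⟩ := ih
      refine ⟨k + 1, ?_⟩
      rw [Function.iterate_succ_apply, aN_of_le (by omega)]
      exact hk
  intro u hu
  cases u with
  | t =>
    obtain ⟨k, hk⟩ := hA 1 (by omega)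
    rw [aN_of_le hn] at hk
    exact ⟨k + 1, hk⟩
  | s => exact ⟨0, rfl⟩
  | d => exact ⟨1, rfl⟩
  | a i =>
    obtain ⟨k, hk⟩ := hA (i + 1) (by have := hu.2; omega)
    exact ⟨k + 1, hk⟩
  | b i =>
    obtain ⟨k, hk⟩ := hA (i + 1) (by have := hu.2; omega)
    exact ⟨k + 1, hk⟩

theorem inv_pi0 (n : ℕ) (hn : 1 ≤ n) :
    BInv n 1 (fun _ => AS.S) (fun _ => false) (fun i => BVal n (pi0 n) (aN n i))
      (fun i => BVal n (pi0 n) (bN n i)) (BVal n (pi0 n) BV.t) 0 := by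
  have hb := (rep_pi0 n hn).bell (unichain_pi0 n hn)
  refine BInv.I0 rfl (by simp) (fun j _ _ => by simp [Rg]) ?_
  have key : ∀ j, j ≤ n + 1 → 1 ≤ j → BVal n (pi0 n) (aN n j) = 0 := by
    intro j hj
    induction hj using Nat.decreasingInduction with
    | self => intro _; exact hb.A0
    | of_succ j hj ih =>
      intro h1
      rw [hb.hS j h1 (by omega) rfl]
      exact ih (by omega)
  rw [hb.hW]
  exact (key 1 (by omega) le_rfl).le

/-- Bland's policy iteration on `𝔅_n` started at `π_0` performs at least `2^n - 1`
improving switches before terminating. -/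
theorem stmt1 (n : ℕ) (hn : 1 ≤ n) (f : ℕ → (BV → BV)) (m : ℕ)
    (h0 : f 0 = pi0 n)
    (hstep : ∀ k < m, IsBlandStep n (NB n) (f k) (f (k + 1)))
    (hterm : ∀ u v, ¬ BImproving n (f m) u v) :
    2 ^ n - 1 ≤ m := by
  have main : ∀ k, k ≤ m → ∃ p α β, PRep n (f k) p α β ∧ BWeakUnichain n (f k) ∧
      BInv n p α β (fun i => BVal n (f k) (aN n i)) (fun i => BVal n (f k) (bN n i))
        (BVal n (f k) BV.t) (2 * (k : ℚ)) := by
    intro k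
    induction k with
    | zero =>
      intro _
      rw [h0]
      exact ⟨1, _, _, rep_pi0 n hn, unichain_pi0 n hn, by simpa using inv_pi0 n hn⟩
    | succ k ih =>
      intro hk
      obtain ⟨p, α, β, hrep, huni, hinv⟩ := ih (by omega)
      obtain ⟨p', α', β', hrep', huni', hst⟩ := bland_abs hrep huni (hstep k (by omega))
      refine ⟨p', α', β', hrep', huni', ?_⟩
      have := step_Inv (hrep.bell huni) (hrep'.bell huni') hst hinv
      rwa [show (2 * ((k + 1 : ℕ) : ℚ)) = 2 * (k : ℚ) + 2 by push_cast; ring]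
  obtain ⟨p, α, β, hrep, huni, hinv⟩ := main m le_rfl
  have key : ∀ u v, BEdge n u v → zB n (f m) u v ≤ 0 := by
    intro u v he
    by_contra hc
    exact hterm u v ⟨he, not_le.1 hc⟩
  have hfin := final_bound (hrep.bell huni)
    (fun j h1 h2 => by
      have := key _ _ (edge_travel h1 h2)
      rw [z_travel n _ j h2] at this
      linarith)
    (fun j h1 h2 => by
      have e1 := key _ _ (edge_enter h1 h2)
      have e2 := key _ _ (edge_skip h1 h2)
      have e3 := key _ _ (edge_board h1 h2)
      have e4 := key _ _ (edge_stay h1 h2)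
      have e5 := key _ _ (edge_leave h1 h2)
      rw [z_enter n _ j h2] at e1
      rw [z_skip n _ j h2] at e2
      rw [z_board n _ j h2] at e3
      rw [z_stay n _ j h2] at e4
      rw [z_leave n _ j h2] at e5
      exact ⟨by linarith, by linarith, by linarith, by linarith, by linarith⟩)
  have hW := hinv.W_le
  have h3 : (2 : ℚ) ^ n ≤ m + 1 := by
    rw [pow_succ] at hfin
    linarith
  have h4 : 2 ^ n ≤ m + 1 := by exact_mod_cast h3
  omega
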